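/- arXiv:2509.10806 — 3 statements merged into one kernel-verified Lean document; each statement's English description precedes it below -/
import Mathlib

section
/- Let d ≥ 1 be an integer and γ ∈ (1/2, (d+2)/4). Define c_{d,γ} = π^{-d/2} Γ(2γ-1) Γ((d+1-2γ)/2)^2 / (Γ((d+2-4γ)/2) Γ((2γ-1)/2)^2) and h(ξ) = c_{d,γ}|ξ|^{2γ-d-1} for ξ ∈ ℝ^d \ {0}. Then for every ξ ∈ ℝ^d \ {0}, the convolution integral ∫_{ℝ^d} h(η) h(ξ-η) dη converges and equals |ξ|^{2γ-1} h(ξ). -/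
open MeasureTheory Set

/-- The constant `c_{d,γ}` of the standard majorizing kernel. -/
noncomputable def cdg (d : ℕ) (γ : ℝ) : ℝ :=
  Real.pi ^ (-(d : ℝ)/2) * Real.Gamma (2*γ - 1) * (Real.Gamma (((d : ℝ) + 1 - 2*γ)/2))^2 /
    (Real.Gamma (((d : ℝ) + 2 - 4*γ)/2) * (Real.Gamma ((2*γ - 1)/2))^2)

/-- The standard majorizing kernel `h(ξ) = c_{d,γ} |ξ|^{2γ-d-1}`. -/
noncomputable def hker (d : ℕ) (γ : ℝ) (ξ : EuclideanSpace ℝ (Fin d)) : ℝ :=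
  cdg d γ * ‖ξ‖ ^ (2*γ - (d : ℝ) - 1)

/-!
The Riesz kernel `I_α(x) = k_α |x| ^ (α - d)` is the average of the heat kernels `p_t(x)` against
the Riemann–Liouville density `t ^ (α / 2 - 1) / Γ(α / 2)`. The heat kernels form a convolution
semigroup in `t`, and the Riemann–Liouville densities form one in their order, so
`I_α * I_β = I_(α + β)`. With `α = 2γ - 1`, the kernel `h` is `(k_α / k_(2α)) I_α`: the factor
`1 / k_(2α)` is what turns `h * h`, a multiple of `|ξ| ^ (2α - d)`, into `|ξ| ^ α h(ξ)`.
-/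

open scoped ENNReal

section RiemannLiouville

open Real ProbabilityTheory

/-- The density `t₊ ^ (a - 1) / Γ(a)` of the Riemann–Liouville fractional integral of order `a`,
extended by zero to `t ≤ 0`. -/
noncomputable def riemannLiouvilleDensity (a : ℝ) : ℝ → ℝ≥0∞ :=
  (Ioi 0).indicator fun t ↦ ENNReal.ofReal (t ^ (a - 1) / Gamma a)

/-- The measure on `ℝ` with density `riemannLiouvilleDensity a`; averaging the semigroup
`exp (-t A)` against it gives the fractional power `A ^ (-a)`. -/
noncomputable def riemannLiouvilleMeasure (a : ℝ) : Measure ℝ :=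
  volume.withDensity (riemannLiouvilleDensity a)

instance (a : ℝ) : SFinite (riemannLiouvilleMeasure a) := by
  unfold riemannLiouvilleMeasure
  infer_instance

@[fun_prop]
lemma measurable_riemannLiouvilleDensity (a : ℝ) : Measurable (riemannLiouvilleDensity a) :=
  Measurable.indicator (by fun_prop) measurableSet_Ioi

lemma riemannLiouvilleDensity_of_pos {a t : ℝ} (ht : 0 < t) :
    riemannLiouvilleDensity a t = ENNReal.ofReal (t ^ (a - 1) / Gamma a) :=
  indicator_of_mem (mem_Ioi.2 ht) _

lemma riemannLiouvilleDensity_of_nonpos {a t : ℝ} (ht : t ≤ 0) :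
    riemannLiouvilleDensity a t = 0 :=
  indicator_of_notMem (notMem_Ioi.2 ht) _

lemma lintegral_riemannLiouvilleMeasure {a : ℝ} {f : ℝ → ℝ≥0∞} (hf : Measurable f) :
    ∫⁻ t, f t ∂riemannLiouvilleMeasure a =
      ∫⁻ t in Ioi 0, ENNReal.ofReal (t ^ (a - 1) / Gamma a) * f t := by
  rw [riemannLiouvilleMeasure,
    lintegral_withDensity_eq_lintegral_mul _ (measurable_riemannLiouvilleDensity a) hf,
    ← lintegral_indicator measurableSet_Ioi]
  simp only [Pi.mul_apply, riemannLiouvilleDensity, indicator_mul_left]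

lemma ae_riemannLiouvilleMeasure_pos (a : ℝ) : ∀ᵐ t ∂riemannLiouvilleMeasure a, 0 < t := by
  rw [riemannLiouvilleMeasure, ae_withDensity_iff (measurable_riemannLiouvilleDensity a)]
  refine .of_forall fun t ht ↦ ?_
  contrapose! ht
  exact riemannLiouvilleDensity_of_nonpos ht

lemma lintegral_eq_ofReal_mul_lintegral_comp_mul_left {u : ℝ} (hu : 0 < u) (f : ℝ → ℝ≥0∞) :
    ∫⁻ s, f s = ENNReal.ofReal u * ∫⁻ x, f (u * x) := by
  have hmap := Real.smul_map_volume_mul_left hu.ne'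
  conv_lhs => rw [← hmap]
  rw [lintegral_smul_measure, abs_of_pos hu, smul_eq_mul]
  congr 1
  exact lintegral_map_equiv f (Homeomorph.mulLeft₀ u hu.ne').toMeasurableEquiv

lemma riemannLiouvilleDensity_mul_eq_mul_betaPDF {a b u : ℝ} (ha : 0 < a) (hb : 0 < b)
    (hu : 0 < u) (x : ℝ) :
    ENNReal.ofReal u *
        (riemannLiouvilleDensity a (u * x) * riemannLiouvilleDensity b (-(u * x) + u)) =
      riemannLiouvilleDensity (a + b) u * betaPDF a b x := by
  rcases le_or_gt x 0 with hx₀ | hx₀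
  · rw [riemannLiouvilleDensity_of_nonpos (mul_nonpos_of_nonneg_of_nonpos hu.le hx₀),
      betaPDF_eq_zero_of_nonpos hx₀, zero_mul, mul_zero, mul_zero]
  rcases le_or_gt 1 x with hx₁ | hx₁
  · have hux : -(u * x) + u ≤ 0 := by nlinarith
    rw [riemannLiouvilleDensity_of_nonpos hux, betaPDF_eq_zero_of_one_le hx₁]
    simp only [mul_zero]
  have h1x : 0 < 1 - x := sub_pos.2 hx₁
  have hux : -(u * x) + u = u * (1 - x) := by ring
  have hpow : u ^ (a + b - 1) = u * u ^ (a - 1) * u ^ (b - 1) := by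
    rw [show a + b - 1 = 1 + (a - 1) + (b - 1) by ring, rpow_add hu, rpow_add hu, rpow_one]
  rw [hux, riemannLiouvilleDensity_of_pos (by positivity),
    riemannLiouvilleDensity_of_pos (by positivity), riemannLiouvilleDensity_of_pos hu,
    betaPDF_of_pos_lt_one hx₀ hx₁, ← ENNReal.ofReal_mul (by positivity),
    ← ENNReal.ofReal_mul (by positivity), ← ENNReal.ofReal_mul (by positivity), beta,
    mul_rpow hu.le hx₀.le, mul_rpow hu.le h1x.le, hpow]
  congr 1
  field_simp

theorem lconvolution_riemannLiouvilleDensity {a b : ℝ} (ha : 0 < a) (hb : 0 < b) :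
    riemannLiouvilleDensity a ⋆ₗ riemannLiouvilleDensity b = riemannLiouvilleDensity (a + b) := by
  ext u
  rw [lconvolution_def]
  rcases le_or_gt u 0 with hu | hu
  · have hzero (s : ℝ) : riemannLiouvilleDensity a s * riemannLiouvilleDensity b (-s + u) = 0 := by
      rcases le_or_gt s 0 with hs | hs
      · rw [riemannLiouvilleDensity_of_nonpos hs, zero_mul]
      · rw [riemannLiouvilleDensity_of_nonpos (t := -s + u) (by linarith), mul_zero]
    simp only [hzero, lintegral_zero, riemannLiouvilleDensity_of_nonpos hu]
  · rw [lintegral_eq_ofReal_mul_lintegral_comp_mul_left hu,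
      ← lintegral_const_mul' _ _ ENNReal.ofReal_ne_top]
    simp only [riemannLiouvilleDensity_mul_eq_mul_betaPDF ha hb hu]
    rw [lintegral_const_mul _ (by unfold betaPDF; fun_prop), lintegral_betaPDF_eq_one ha hb,
      mul_one]

theorem conv_riemannLiouvilleMeasure {a b : ℝ} (ha : 0 < a) (hb : 0 < b) :
    (riemannLiouvilleMeasure a).conv (riemannLiouvilleMeasure b) =
      riemannLiouvilleMeasure (a + b) := by
  simp only [riemannLiouvilleMeasure]
  rw [conv_withDensity_eq_lconvolution (by fun_prop) (by fun_prop),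
    lconvolution_riemannLiouvilleDensity ha hb]

end RiemannLiouville

section HeatKernel

open Real Module

variable {E : Type*} [NormedAddCommGroup E] [InnerProductSpace ℝ E]

/-- The heat kernel of the semigroup `exp (t Δ)` on a Euclidean space. -/
noncomputable def heatKernel (t : ℝ) (x : E) : ℝ≥0∞ :=
  ENNReal.ofReal ((4 * π * t) ^ (-(finrank ℝ E : ℝ) / 2) * exp (-‖x‖ ^ 2 / (4 * t)))

/- The Gaussian law of a Brownian bridge: conditionally on sitting at `ξ` at time `s + t`, the
position at time `s` has mean `(s / (s + t)) • ξ` and its variance is that of time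
`s * t / (s + t)`. -/
lemma heatKernel_mul_heatKernel {s t : ℝ} (hs : 0 < s) (ht : 0 < t) (ξ η : E) :
    heatKernel s η * heatKernel t (-η + ξ) =
      heatKernel (s + t) ξ * heatKernel (s * t / (s + t)) (η - (s / (s + t)) • ξ) := by
  have hsquare : -‖η‖ ^ 2 / (4 * s) + -‖-η + ξ‖ ^ 2 / (4 * t) = -‖ξ‖ ^ 2 / (4 * (s + t)) +
      -‖η - (s / (s + t)) • ξ‖ ^ 2 / (4 * (s * t / (s + t))) := by
    rw [neg_add_eq_sub, norm_sub_sq_real, norm_sub_sq_real, norm_smul, inner_smul_right,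
      real_inner_comm, mul_pow, Real.norm_eq_abs, sq_abs]
    field_simp
    ring
  have hprod : 4 * π * s * (4 * π * t) = 4 * π * (s + t) * (4 * π * (s * t / (s + t))) := by
    field_simp
  simp only [heatKernel]
  rw [← ENNReal.ofReal_mul (by positivity), ← ENNReal.ofReal_mul (by positivity),
    mul_mul_mul_comm, mul_mul_mul_comm _ _ (_ ^ _), ← mul_rpow (by positivity) (by positivity),
    ← mul_rpow (by positivity) (by positivity), ← exp_add, ← exp_add, hsquare, hprod]

variable [MeasurableSpace E] [BorelSpace E]

@[fun_prop]
lemma measurable_heatKernel {X : Type*} [MeasurableSpace X] {f : X → ℝ} {g : X → E}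
    (hf : Measurable f) (hg : Measurable g) : Measurable fun x ↦ heatKernel (f x) (g x) := by
  unfold heatKernel
  fun_prop

variable [FiniteDimensional ℝ E]

lemma lintegral_heatKernel {t : ℝ} (ht : 0 < t) : ∫⁻ x : E, heatKernel t x = 1 := by
  have hb : 0 < 1 / (4 * t) := by positivity
  have hgauss := GaussianFourier.integral_rexp_neg_mul_sq_norm (V := E) hb
  have hpi : π / (1 / (4 * t)) = 4 * π * t := by field_simp
  have hexp (x : E) : -(1 / (4 * t)) * ‖x‖ ^ 2 = -‖x‖ ^ 2 / (4 * t) := by ring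
  simp only [hpi, hexp] at hgauss
  have hint : Integrable fun x : E ↦ exp (-‖x‖ ^ 2 / (4 * t)) :=
    .of_integral_ne_zero (by rw [hgauss]; positivity)
  unfold heatKernel
  rw [← ofReal_integral_eq_lintegral_ofReal (hint.const_mul _) (.of_forall fun x ↦ by positivity),
    integral_const_mul, hgauss, neg_div, ← rpow_add (by positivity), neg_add_cancel, rpow_zero,
    ENNReal.ofReal_one]

theorem lconvolution_heatKernel {s t : ℝ} (hs : 0 < s) (ht : 0 < t) :
    heatKernel s ⋆ₗ heatKernel t = (heatKernel (s + t) : E → ℝ≥0∞) := by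
  ext ξ
  simp only [lconvolution_def, heatKernel_mul_heatKernel hs ht]
  rw [lintegral_const_mul _ (by fun_prop),
    lintegral_sub_right_eq_self (fun x ↦ heatKernel (s * t / (s + t)) x),
    lintegral_heatKernel (by positivity), mul_one]

end HeatKernel

section RieszKernel

open Real Module ProbabilityTheory

variable {E : Type*} [NormedAddCommGroup E] [InnerProductSpace ℝ E]

/-- The constant for which `rieszConst n α * ‖x‖ ^ (α - n)` is the convolution kernel of
`(-Δ) ^ (-α / 2)` on an `n`-dimensional Euclidean space. -/
noncomputable def rieszConst (n : ℕ) (α : ℝ) : ℝ :=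
  Gamma ((n - α) / 2) / (π ^ ((n : ℝ) / 2) * 2 ^ α * Gamma (α / 2))

/-- The Riesz kernel of order `α`, the convolution kernel of `(-Δ) ^ (-α / 2)`. -/
noncomputable def rieszKernel (α : ℝ) (x : E) : ℝ :=
  rieszConst (finrank ℝ E) α * ‖x‖ ^ (α - finrank ℝ E)

lemma rieszConst_pos {n : ℕ} {α : ℝ} (hα : 0 < α) (hαn : α < n) : 0 < rieszConst n α := by
  have hnα : 0 < n - α := sub_pos.2 hαn
  exact div_pos (Gamma_pos_of_pos (half_pos hnα)) (by positivity)

lemma rieszKernel_nonneg {α : ℝ} (hα : 0 < α) (hαn : α < finrank ℝ E) (x : E) :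
    0 ≤ rieszKernel α x :=
  mul_nonneg (rieszConst_pos hα hαn).le (by positivity)

lemma rieszKernel_mul_rieszKernel_nonneg {α β : ℝ} (hα : 0 < α) (hβ : 0 < β)
    (hαβ : α + β < finrank ℝ E) (x y : E) : 0 ≤ rieszKernel α x * rieszKernel β y :=
  mul_nonneg (rieszKernel_nonneg hα (by linarith) x) (rieszKernel_nonneg hβ (by linarith) y)

lemma setLIntegral_Ioi_eq_setLIntegral_comp_inv (f : ℝ → ℝ≥0∞) :
    ∫⁻ t in Ioi 0, f t = ∫⁻ r in Ioi 0, ENNReal.ofReal (r ^ 2)⁻¹ * f r⁻¹ := by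
  have himage : (fun r : ℝ ↦ r⁻¹) '' Ioi 0 = Ioi 0 := by
    ext r
    simp
  conv_lhs => rw [← himage]
  rw [lintegral_image_eq_lintegral_abs_deriv_mul measurableSet_Ioi
    (fun r hr ↦ (hasDerivAt_inv (mem_Ioi.1 hr).ne').hasDerivWithinAt) inv_injective.injOn]
  simp only [abs_neg, abs_inv, abs_sq]

lemma setLIntegral_Ioi_gammaPDF {a r : ℝ} (ha : 0 < a) (hr : 0 < r) :
    ∫⁻ t in Ioi 0, gammaPDF a r t = 1 := by
  have hsupport : (gammaPDF a r).support ⊆ Ici 0 := fun t ht ↦ by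
    by_contra hneg
    exact ht (gammaPDF_of_neg (not_le.1 hneg))
  rw [setLIntegral_congr Ioi_ae_eq_Ici, setLIntegral_eq_of_support_subset hsupport,
    lintegral_gammaPDF_eq_one ha hr]

lemma heatKernel_inv {r : ℝ} (hr : 0 < r) (x : E) :
    heatKernel r⁻¹ x = ENNReal.ofReal (r ^ ((finrank ℝ E : ℝ) / 2) /
      (2 ^ (finrank ℝ E : ℝ) * π ^ ((finrank ℝ E : ℝ) / 2)) * exp (-(‖x‖ ^ 2 / 4 * r))) := by
  have hfour : (4 : ℝ) ^ ((finrank ℝ E : ℝ) / 2) = 2 ^ (finrank ℝ E : ℝ) := by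
    rw [show (4 : ℝ) = 2 ^ (2 : ℝ) by norm_num, ← rpow_mul two_pos.le,
      mul_div_cancel₀ _ two_ne_zero]
  have hexp : -‖x‖ ^ 2 / (4 * r⁻¹) = -(‖x‖ ^ 2 / 4 * r) := by field_simp
  rw [heatKernel, neg_div, rpow_neg (by positivity), mul_rpow (by positivity) (by positivity),
    mul_rpow (by positivity) (by positivity), inv_rpow hr.le, hfour, hexp, mul_inv, inv_inv,
    inv_mul_eq_div]

/- The Gamma law on the right has total mass one, so the substitution `t = r⁻¹` in the subordination
integral leaves exactly the Riesz kernel. -/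
lemma riemannLiouville_mul_heatKernel_inv {α r : ℝ} (hαn : α < finrank ℝ E)
    {x : E} (hx : x ≠ 0) (hr : 0 < r) :
    ENNReal.ofReal (r ^ 2)⁻¹ *
        (ENNReal.ofReal (r⁻¹ ^ (α / 2 - 1) / Gamma (α / 2)) * heatKernel r⁻¹ x) =
      ENNReal.ofReal (rieszKernel α x) *
        gammaPDF ((finrank ℝ E - α) / 2) (‖x‖ ^ 2 / 4) r := by
  rw [heatKernel_inv hr, gammaPDF_of_nonneg hr.le, ← ENNReal.ofReal_mul' (by positivity),
    ← ENNReal.ofReal_mul (by positivity), ← ENNReal.ofReal_mul' (by positivity), rieszKernel,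
    rieszConst]
  set n := (finrank ℝ E : ℝ)
  have hx' : 0 < ‖x‖ := norm_pos_iff.2 hx
  have hr_pow : r ^ ((n - α) / 2 - 1) = (r ^ 2)⁻¹ * r⁻¹ ^ (α / 2 - 1) * r ^ (n / 2) := by
    rw [inv_rpow hr.le, ← rpow_neg hr.le, ← rpow_natCast, ← rpow_neg hr.le, ← rpow_add hr,
      ← rpow_add hr]
    congr 1
    push_cast
    ring
  have hx_pow : (‖x‖ ^ 2 / 4) ^ ((n - α) / 2) = 2 ^ α / (2 ^ n * ‖x‖ ^ (α - n)) := by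
    rw [show ‖x‖ ^ 2 / 4 = (‖x‖ / 2) ^ (2 : ℝ) by norm_num [div_pow],
      ← rpow_mul (by positivity), mul_div_cancel₀ _ two_ne_zero,
      div_rpow hx'.le two_pos.le, rpow_sub two_pos, ← neg_sub α n, rpow_neg hx'.le]
    field_simp
  have hΓ := (Gamma_pos_of_pos (half_pos (sub_pos.2 hαn))).ne'
  rw [hr_pow, hx_pow]
  congr 1
  field_simp

variable [MeasurableSpace E] [BorelSpace E]

@[fun_prop]
lemma measurable_rieszKernel (α : ℝ) : Measurable (rieszKernel α : E → ℝ) := by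
  unfold rieszKernel
  fun_prop

theorem lintegral_heatKernel_riemannLiouvilleMeasure {α : ℝ}
    (hαn : α < finrank ℝ E) {x : E} (hx : x ≠ 0) :
    ∫⁻ t, heatKernel t x ∂riemannLiouvilleMeasure (α / 2) = ENNReal.ofReal (rieszKernel α x) := by
  have hshape : 0 < (finrank ℝ E - α) / 2 := half_pos (sub_pos.2 hαn)
  have hrate : 0 < ‖x‖ ^ 2 / 4 := by positivity
  rw [lintegral_riemannLiouvilleMeasure (by fun_prop), setLIntegral_Ioi_eq_setLIntegral_comp_inv,
    setLIntegral_congr_fun measurableSet_Ioi fun r hr ↦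
      riemannLiouville_mul_heatKernel_inv hαn hx hr,
    lintegral_const_mul' _ _ ENNReal.ofReal_ne_top, setLIntegral_Ioi_gammaPDF hshape hrate, mul_one]

variable [FiniteDimensional ℝ E]

theorem lintegral_rieszKernel_mul_rieszKernel {α β : ℝ} (hα : 0 < α) (hβ : 0 < β)
    (hαβ : α + β < finrank ℝ E) {ξ : E} (hξ : ξ ≠ 0) :
    ∫⁻ η, ENNReal.ofReal (rieszKernel α η * rieszKernel β (ξ - η)) =
      ENNReal.ofReal (rieszKernel (α + β) ξ) := by
  have hαn : α < finrank ℝ E := by linarith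
  have hβn : β < finrank ℝ E := by linarith
  have : Nontrivial E := ⟨ξ, 0, hξ⟩
  set μ := riemannLiouvilleMeasure (α / 2)
  set ν := riemannLiouvilleMeasure (β / 2)
  have hsubord : ∀ᵐ η : E, ENNReal.ofReal (rieszKernel α η * rieszKernel β (ξ - η)) =
      ∫⁻ p, heatKernel p.1 η * heatKernel p.2 (-η + ξ) ∂μ.prod ν := by
    filter_upwards [Measure.ae_ne volume 0, Measure.ae_ne volume ξ] with η hη hηξ
    rw [lintegral_prod_mul (f := fun s ↦ heatKernel s η) (g := fun t ↦ heatKernel t (-η + ξ))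
        (by fun_prop) (by fun_prop),
      lintegral_heatKernel_riemannLiouvilleMeasure hαn hη, neg_add_eq_sub,
      lintegral_heatKernel_riemannLiouvilleMeasure hβn (sub_ne_zero.2 hηξ.symm),
      ENNReal.ofReal_mul (rieszKernel_nonneg hα hαn η)]
  have hsemigroup : ∀ᵐ p ∂μ.prod ν,
      ∫⁻ η : E, heatKernel p.1 η * heatKernel p.2 (-η + ξ) = heatKernel (p.1 + p.2) ξ := by
    filter_upwards [Measure.quasiMeasurePreserving_fst.ae (ae_riemannLiouvilleMeasure_pos _),
      Measure.quasiMeasurePreserving_snd.ae (ae_riemannLiouvilleMeasure_pos _)] with p hs ht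
    exact congrFun (lconvolution_heatKernel hs ht) ξ
  calc ∫⁻ η, ENNReal.ofReal (rieszKernel α η * rieszKernel β (ξ - η))
      = ∫⁻ η : E, ∫⁻ p, heatKernel p.1 η * heatKernel p.2 (-η + ξ) ∂μ.prod ν :=
        lintegral_congr_ae hsubord
    _ = ∫⁻ p, ∫⁻ η : E, heatKernel p.1 η * heatKernel p.2 (-η + ξ) ∂volume ∂μ.prod ν :=
        lintegral_lintegral_swap (by fun_prop)
    _ = ∫⁻ p, heatKernel (p.1 + p.2) ξ ∂μ.prod ν := lintegral_congr_ae hsemigroup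
    _ = ∫⁻ u, heatKernel u ξ ∂(μ.conv ν) :=
        (Measure.lintegral_conv_eq_lintegral_sum (f := (heatKernel · ξ)) (by fun_prop)).symm
    _ = ∫⁻ u, heatKernel u ξ ∂riemannLiouvilleMeasure ((α + β) / 2) := by
        rw [conv_riemannLiouvilleMeasure (half_pos hα) (half_pos hβ), add_div]
    _ = ENNReal.ofReal (rieszKernel (α + β) ξ) :=
        lintegral_heatKernel_riemannLiouvilleMeasure hαβ hξ

theorem integrable_rieszKernel_mul_rieszKernel {α β : ℝ} (hα : 0 < α) (hβ : 0 < β)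
    (hαβ : α + β < finrank ℝ E) {ξ : E} (hξ : ξ ≠ 0) :
    Integrable fun η ↦ rieszKernel α η * rieszKernel β (ξ - η) := by
  rw [← lintegral_ofReal_ne_top_iff_integrable (by fun_prop)
      (.of_forall fun _ ↦ rieszKernel_mul_rieszKernel_nonneg hα hβ hαβ _ _),
    lintegral_rieszKernel_mul_rieszKernel hα hβ hαβ hξ]
  exact ENNReal.ofReal_ne_top

theorem integral_rieszKernel_mul_rieszKernel {α β : ℝ} (hα : 0 < α) (hβ : 0 < β)
    (hαβ : α + β < finrank ℝ E) {ξ : E} (hξ : ξ ≠ 0) :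
    ∫ η, rieszKernel α η * rieszKernel β (ξ - η) = rieszKernel (α + β) ξ := by
  rw [integral_eq_lintegral_of_nonneg_ae
      (.of_forall fun _ ↦ rieszKernel_mul_rieszKernel_nonneg hα hβ hαβ _ _) (by fun_prop),
    lintegral_rieszKernel_mul_rieszKernel hα hβ hαβ hξ,
    ENNReal.toReal_ofReal (rieszKernel_nonneg (add_pos hα hβ) hαβ ξ)]

end RieszKernel

lemma cdg_eq_rieszConst_sq_div (d : ℕ) (γ : ℝ) :
    cdg d γ = rieszConst d (2 * γ - 1) ^ 2 / rieszConst d (2 * (2 * γ - 1)) := by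
  have hπ : Real.pi ^ (-(d : ℝ) / 2) = (Real.pi ^ ((d : ℝ) / 2))⁻¹ := by
    rw [neg_div, Real.rpow_neg Real.pi_pos.le]
  have htwo : (2 : ℝ) ^ (2 * (2 * γ - 1)) = (2 ^ (2 * γ - 1)) ^ 2 := by
    rw [two_mul, Real.rpow_add two_pos, sq]
  have hΓα : ((d : ℝ) + 1 - 2 * γ) / 2 = (d - (2 * γ - 1)) / 2 := by ring
  have hΓ2α : ((d : ℝ) + 2 - 4 * γ) / 2 = (d - 2 * (2 * γ - 1)) / 2 := by ring
  rw [cdg, rieszConst, rieszConst, hπ, htwo, hΓα, hΓ2α, mul_div_cancel_left₀ _ two_ne_zero]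
  field_simp

lemma hker_eq_mul_rieszKernel (d : ℕ) (γ : ℝ) (x : EuclideanSpace ℝ (Fin d)) :
    hker d γ x = rieszConst d (2 * γ - 1) / rieszConst d (2 * (2 * γ - 1)) *
      rieszKernel (2 * γ - 1) x := by
  rw [hker, cdg_eq_rieszConst_sq_div, rieszKernel, finrank_euclideanSpace_fin, sub_right_comm]
  ring

theorem stmt0 (d : ℕ) (hd : 1 ≤ d) (γ : ℝ)
    (hγ : γ ∈ Set.Ioo (1/2 : ℝ) (((d : ℝ) + 2)/4))
    (ξ : EuclideanSpace ℝ (Fin d)) (hξ : ξ ≠ 0) :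
    Integrable (fun η => hker d γ η * hker d γ (ξ - η)) (volume : Measure (EuclideanSpace ℝ (Fin d))) ∧
    ∫ η, hker d γ η * hker d γ (ξ - η) = ‖ξ‖ ^ (2*γ - 1) * hker d γ ξ := by
  set α := 2 * γ - 1 with hα
  have hα_pos : 0 < α := by linarith [hγ.1]
  have hα_lt : 2 * α < d := by linarith [hγ.2]
  have hα_add : α + α < Module.finrank ℝ (EuclideanSpace ℝ (Fin d)) := by
    rwa [finrank_euclideanSpace_fin, ← two_mul]
  have hconst := (rieszConst_pos (by positivity) hα_lt).ne'
  have hpow : ‖ξ‖ ^ (2 * α - d) = ‖ξ‖ ^ α * ‖ξ‖ ^ (α - d) := by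
    rw [← Real.rpow_add (norm_pos_iff.2 hξ)]
    ring_nf
  simp only [hker_eq_mul_rieszKernel, ← hα, mul_mul_mul_comm _ (rieszKernel _ _)]
  refine ⟨(integrable_rieszKernel_mul_rieszKernel hα_pos hα_pos hα_add hξ).const_mul _, ?_⟩
  rw [integral_const_mul, integral_rieszKernel_mul_rieszKernel hα_pos hα_pos hα_add hξ, ← two_mul,
    rieszKernel, rieszKernel, finrank_euclideanSpace_fin, hpow]
  field_simp
end

section
/- Let d ≥ 2 be an integer, γ ∈ (1/2,(d+2)/4), a = (d+1)/2 − γ, and C̄_{d,γ} = (2/√π)·Γ(2γ−1)Γ(a)² / (Γ((d−1)/2)·Γ(2a − d/2)·Γ((2γ−1)/2)²). Then for every ξ ∈ ℝ^d \ {0} and every bounded measurable k : [0,∞) → ℝ, ∫_{ℝ^d} k(|η|/|ξ|) H(η|ξ) dη = ∫_0^∞ k(r) g(r) dr, where g(r) = C̄_{d,γ} r^{2γ−2} ∫_0^{π/2} sin^{d−2}(φ) [ (1 − 2r cos φ + r²)^{−a} + (1 + 2r cos φ + r²)^{−a} ] dφ. -/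
open MeasureTheory Set Real

/-- `H(η|ξ) = c_{d,γ} |η|^{2γ−d−1} |ξ−η|^{2γ−d−1} |ξ|^{d+2−4γ}`. -/
noncomputable def Hker (d : ℕ) (γ : ℝ) (η ξ : EuclideanSpace ℝ (Fin d)) : ℝ :=
  cdg d γ * ‖η‖ ^ (2*γ - (d : ℝ) - 1) * ‖ξ - η‖ ^ (2*γ - (d : ℝ) - 1)
    * ‖ξ‖ ^ ((d : ℝ) + 2 - 4*γ)

/-- The constant `C̄_{d,γ}`. -/
noncomputable def Cbar (d : ℕ) (γ : ℝ) : ℝ :=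
  2 / Real.sqrt Real.pi * Real.Gamma (2*γ - 1) * (Real.Gamma (((d : ℝ) + 1)/2 - γ))^2 /
    (Real.Gamma (((d : ℝ) - 1)/2) * Real.Gamma (2*(((d : ℝ) + 1)/2 - γ) - (d : ℝ)/2)
      * (Real.Gamma ((2*γ - 1)/2))^2)

/-!
By scaling, only a unit vector `ξ = e` matters. Since `‖e - y‖² = 1 - 2⟪e, y⟫ + ‖y‖²`, polar
coordinates about the axis `e` show that `y ↦ ‖y‖` pushes the measure `‖e - y‖ ^ (2b) dy` on
`ℝⁿ⁺²` forward to `|𝕊ⁿ| rⁿ⁺¹ (∫₀^π sinⁿ φ (1 - 2 r cos φ + r²) ^ b dφ) dr`. The remaining factor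
`|η| ^ (2γ - d - 1)` of `H(η|ξ)` is a function of `‖η‖` and can be absorbed into `k`, and the
reflection `φ ↦ π - φ` folds the angular integral onto `(0, π/2)`.
-/

open Module
open scoped ENNReal RealInnerProductSpace

/-- The surface area `|𝕊^{n-1}|` of the unit sphere of an `n`-dimensional Euclidean space. -/
noncomputable def unitSphereArea (n : ℕ) : ℝ := 2 * √π ^ n / Gamma (n / 2)

lemma unitSphereArea_nonneg (n : ℕ) : 0 ≤ unitSphereArea n :=
  div_nonneg (by positivity) (Gamma_nonneg_of_nonneg (by positivity))

section NormedSpace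

variable {E : Type*} [NormedAddCommGroup E] [NormedSpace ℝ E] [FiniteDimensional ℝ E]
  [Nontrivial E] [MeasurableSpace E] [BorelSpace E]

lemma lintegral_fun_norm_addHaar (μ : Measure E) [μ.IsAddHaarMeasure] {f : ℝ → ℝ≥0∞}
    (hf : Measurable f) :
    ∫⁻ x, f ‖x‖ ∂μ =
      μ.toSphere univ * ∫⁻ r in Ioi 0, ENNReal.ofReal (r ^ (finrank ℝ E - 1)) * f r :=
  calc
    ∫⁻ x, f ‖x‖ ∂μ = ∫⁻ x : ({0}ᶜ : Set E), f ‖x.1‖ ∂μ.comap (↑) := by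
      rw [lintegral_subtype_comap (measurableSet_singleton _).compl fun x ↦ f ‖x‖,
        restrict_compl_singleton]
    _ = ∫⁻ x, f x.2 ∂μ.toSphere.prod (.volumeIoiPow (finrank ℝ E - 1)) := by
      simpa using μ.measurePreserving_homeomorphUnitSphereProd.lintegral_comp_emb
        (Homeomorph.measurableEmbedding _) (f ∘ Subtype.val ∘ Prod.snd)
    _ = μ.toSphere univ * ∫⁻ r, f r ∂Measure.volumeIoiPow (finrank ℝ E - 1) := by
      rw [lintegral_prod _ (by fun_prop)]
      simp only [lintegral_const, mul_comm]
    _ = _ := by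
      rw [Measure.volumeIoiPow,
        lintegral_withDensity_eq_lintegral_mul _ (by fun_prop) (by fun_prop),
        ← lintegral_subtype_comap measurableSet_Ioi]
      rfl

end NormedSpace

section InnerProductSpace

variable {E : Type*} [NormedAddCommGroup E] [InnerProductSpace ℝ E]

lemma norm_smul_add_orthogonal {e : E} (he : ‖e‖ = 1) (t : ℝ) (y : (ℝ ∙ e)ᗮ) :
    ‖t • e + y‖ = √(t ^ 2 + ‖y‖ ^ 2) := by
  have h : ⟪t • e, (y : E)⟫ = 0 := by
    rw [real_inner_smul_left, Submodule.mem_orthogonal_singleton_iff_inner_right.1 y.2, mul_zero]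
  rw [← sqrt_sq (norm_nonneg _), norm_add_sq_real, h, norm_smul, he]
  simp

lemma inner_smul_add_orthogonal {e : E} (he : ‖e‖ = 1) (t : ℝ) (y : (ℝ ∙ e)ᗮ) :
    ⟪e, t • e + y⟫ = t := by
  rw [inner_add_right, Submodule.mem_orthogonal_singleton_iff_inner_right.1 y.2,
    real_inner_smul_right, real_inner_self_eq_norm_sq, he]
  ring

variable [FiniteDimensional ℝ E] [MeasurableSpace E] [BorelSpace E]

lemma toSphere_volume_univ [Nontrivial E] :
    (volume : Measure E).toSphere univ = ENNReal.ofReal (unitSphereArea (finrank ℝ E)) := by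
  have hdim : (0 : ℝ) < finrank ℝ E := by exact_mod_cast finrank_pos
  rw [Measure.toSphere_apply_univ, InnerProductSpace.volume_ball, ENNReal.ofReal_one, one_pow,
    one_mul, ← ENNReal.ofReal_natCast, ← ENNReal.ofReal_mul hdim.le, unitSphereArea,
    Gamma_add_one (by positivity)]
  congr 1
  have := (Gamma_pos_of_pos (half_pos hdim)).ne'
  field_simp

lemma lintegral_eq_lintegral_lintegral_orthogonal {e : E} (he : ‖e‖ = 1) {f : E → ℝ≥0∞}
    (hf : Measurable f) :
    ∫⁻ x, f x = ∫⁻ t : ℝ, ∫⁻ y : (ℝ ∙ e)ᗮ, f (t • e + y) := by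
  let K := ℝ ∙ e
  have hK : MeasurePreserving (fun p : K × Kᗮ ↦ (p.1 + p.2 : E)) :=
    K.orthogonalDecomposition.symm.measurePreserving.comp (WithLp.volume_preserving_toLp K Kᗮ)
  have he' := (LinearIsometryEquiv.toSpanUnitSingleton (𝕜 := ℝ) e he).measurePreserving
  rw [← hK.lintegral_comp hf, Measure.volume_eq_prod, lintegral_prod _ (by fun_prop),
    ← he'.lintegral_comp (by fun_prop)]
  rfl

end InnerProductSpace

lemma polarCoord_symm_mem_upperHalfPlane_iff {r φ : ℝ} (hr : 0 < r) (hφ : φ ∈ Ioo (-π) π) :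
    0 < r * sin φ ↔ φ ∈ Ioo 0 π := by
  rw [mul_pos_iff_of_pos_left hr]
  refine ⟨fun h ↦ ⟨?_, hφ.2⟩, fun h ↦ sin_pos_of_mem_Ioo h⟩
  by_contra! hφ0
  exact h.not_ge (sin_nonpos_of_nonpos_of_neg_pi_le hφ0 hφ.1.le)

lemma lintegral_upperHalfPlane_eq_polar {f : ℝ → ℝ → ℝ≥0∞} (hf : Measurable f.uncurry) :
    ∫⁻ x, ∫⁻ y in Ioi 0, f x y =
      ∫⁻ r in Ioi 0, ∫⁻ φ in Ioo 0 π, ENNReal.ofReal r * f (r * cos φ) (r * sin φ) := by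
  let H : Set (ℝ × ℝ) := univ ×ˢ Ioi 0
  have hH : MeasurableSet H := .prod .univ measurableSet_Ioi
  calc
    ∫⁻ x, ∫⁻ y in Ioi 0, f x y = ∫⁻ p, H.indicator f.uncurry p := by
      rw [lintegral_indicator hH, Measure.volume_eq_prod, setLIntegral_prod _ hf.aemeasurable,
        setLIntegral_univ]
      rfl
    _ = ∫⁻ r in Ioi 0, ∫⁻ φ in Ioo (-π) π,
          ENNReal.ofReal r * H.indicator f.uncurry (r * cos φ, r * sin φ) := by
      have := hf.indicator hH
      rw [← lintegral_comp_polarCoord_symm, polarCoord_target, Measure.volume_eq_prod,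
        setLIntegral_prod _ (by simp only [polarCoord_symm_apply]; fun_prop)]
      rfl
    _ = ∫⁻ r in Ioi 0, ∫⁻ φ in Ioo 0 π, ENNReal.ofReal r * f (r * cos φ) (r * sin φ) := by
      refine setLIntegral_congr_fun measurableSet_Ioi fun r hr ↦ ?_
      have hsub : Ioo (0 : ℝ) π ⊆ Ioo (-π) π :=
        fun φ hφ ↦ ⟨(neg_neg_of_pos pi_pos).trans hφ.1, hφ.2⟩
      rw [← Measure.restrict_restrict_of_subset hsub,
        ← lintegral_indicator (s := Ioo 0 π) measurableSet_Ioo]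
      refine setLIntegral_congr_fun measurableSet_Ioo fun φ hφ ↦ ?_
      have := polarCoord_symm_mem_upperHalfPlane_iff hr hφ
      simp_all [H, indicator]

section InnerProductSpace

variable {E : Type*} [NormedAddCommGroup E] [InnerProductSpace ℝ E] [FiniteDimensional ℝ E]
  [MeasurableSpace E] [BorelSpace E] {n : ℕ}

-- Polar coordinates in `eᗮ`, then planar ones for the pair `(⟪e, y⟫, dist(y, ℝ e))`.
lemma lintegral_norm_inner_eq_polar (hE : finrank ℝ E = n + 2) {e : E} (he : ‖e‖ = 1)
    {f : ℝ → ℝ → ℝ≥0∞} (hf : Measurable f.uncurry) :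
    ∫⁻ y : E, f ‖y‖ ⟪e, y⟫ =
      ∫⁻ r in Ioi 0, ∫⁻ φ in Ioo 0 π,
        ENNReal.ofReal (unitSphereArea (n + 1) * r ^ (n + 1) * sin φ ^ n) * f r (r * cos φ) := by
  have : Fact (finrank ℝ E = (n + 1) + 1) := ⟨hE⟩
  have hdim : finrank ℝ (ℝ ∙ e)ᗮ = n + 1 :=
    Submodule.finrank_orthogonal_span_singleton (norm_ne_zero_iff.1 (he ▸ one_ne_zero))
  have : Nontrivial (ℝ ∙ e)ᗮ := nontrivial_of_finrank_pos (R := ℝ) (hdim ▸ n.succ_pos)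
  let A := ENNReal.ofReal (unitSphereArea (n + 1))
  calc
    ∫⁻ y, f ‖y‖ ⟪e, y⟫ = ∫⁻ t : ℝ, ∫⁻ y : (ℝ ∙ e)ᗮ, f √(t ^ 2 + ‖y‖ ^ 2) t := by
      rw [lintegral_eq_lintegral_lintegral_orthogonal he (by fun_prop)]
      simp only [norm_smul_add_orthogonal he, inner_smul_add_orthogonal he]
    _ = ∫⁻ t : ℝ, ∫⁻ s in Ioi 0, A * (ENNReal.ofReal (s ^ n) * f √(t ^ 2 + s ^ 2) t) := by
      refine lintegral_congr fun t ↦ ?_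
      rw [lintegral_fun_norm_addHaar volume (f := fun s ↦ f √(t ^ 2 + s ^ 2) t) (by fun_prop),
        toSphere_volume_univ, hdim, Nat.add_sub_cancel, lintegral_const_mul _ (by fun_prop)]
    _ = _ := by
      rw [lintegral_upperHalfPlane_eq_polar (by fun_prop)]
      refine setLIntegral_congr_fun measurableSet_Ioi fun r hr ↦ ?_
      refine setLIntegral_congr_fun measurableSet_Ioo fun φ _ ↦ ?_
      have hr : 0 < r := hr
      have hnorm : √((r * cos φ) ^ 2 + (r * sin φ) ^ 2) = r := by
        rw [mul_pow, mul_pow, ← mul_add, cos_sq_add_sin_sq, mul_one, sqrt_sq hr.le]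
      have hA := unitSphereArea_nonneg (n + 1)
      simp only [A, hnorm]
      rw [← mul_assoc, ← mul_assoc, ← ENNReal.ofReal_mul hr.le,
        ← ENNReal.ofReal_mul (by positivity)]
      congr 2
      ring

lemma measurable_lintegral_zonal_density (n : ℕ) {w : ℝ → ℝ≥0∞} (hw : Measurable w) :
    Measurable fun r : ℝ ↦ ∫⁻ φ in Ioo 0 π,
      ENNReal.ofReal (unitSphereArea (n + 1) * r ^ (n + 1) * sin φ ^ n) *
        w √(1 - 2 * r * cos φ + r ^ 2) :=
  Measurable.lintegral_prod_right' (f := fun p : ℝ × ℝ ↦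
    ENNReal.ofReal (unitSphereArea (n + 1) * p.1 ^ (n + 1) * sin p.2 ^ n) *
      w √(1 - 2 * p.1 * cos p.2 + p.1 ^ 2)) (by fun_prop)

lemma map_norm_withDensity_norm_sub (hE : finrank ℝ E = n + 2) {e : E} (he : ‖e‖ = 1)
    {w : ℝ → ℝ≥0∞} (hw : Measurable w) :
    (volume.withDensity fun y : E ↦ w ‖e - y‖).map norm =
      (volume.restrict (Ioi 0)).withDensity fun r ↦ ∫⁻ φ in Ioo 0 π,
        ENNReal.ofReal (unitSphereArea (n + 1) * r ^ (n + 1) * sin φ ^ n) *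
          w √(1 - 2 * r * cos φ + r ^ 2) := by
  refine Measure.ext_of_lintegral _ fun f hf ↦ ?_
  have hnorm (y : E) : ‖e - y‖ = √(1 - 2 * ⟪e, y⟫ + ‖y‖ ^ 2) := by
    rw [← sqrt_sq (norm_nonneg (e - y)), norm_sub_sq_real, he, one_pow]
  rw [lintegral_map hf measurable_norm,
    lintegral_withDensity_eq_lintegral_mul _ (by fun_prop) (by fun_prop),
    lintegral_withDensity_eq_lintegral_mul _
      (measurable_lintegral_zonal_density n hw) hf]
  simp only [Pi.mul_apply, hnorm]
  rw [lintegral_norm_inner_eq_polar hE he (f := fun r t ↦ w √(1 - 2 * t + r ^ 2) * f r)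
    (by fun_prop)]
  refine lintegral_congr fun r ↦ ?_
  rw [← lintegral_mul_const _ (by fun_prop)]
  simp only [mul_assoc]

end InnerProductSpace

/-- The integral of `(1 - 2 r cos φ + r²) ^ b` against `sin φ ^ n` over the colatitude `φ ∈ (0, π)`.
Up to the factor `|𝕊ⁿ|` it is the integral of `‖e - r ω‖ ^ (2 b)` over `ω ∈ 𝕊ⁿ⁺¹`, for any pole
`e ∈ 𝕊ⁿ⁺¹`. -/
noncomputable def zonalIntegral (n : ℕ) (b r : ℝ) : ℝ :=
  ∫ φ in Ioo 0 π, sin φ ^ n * (1 - 2 * r * cos φ + r ^ 2) ^ b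

lemma one_sub_two_mul_cos_add_sq_pos {r : ℝ} (hr : |r| ≠ 1) (φ : ℝ) :
    0 < 1 - 2 * r * cos φ + r ^ 2 := by
  have hpos : 0 < (1 - |r|) ^ 2 := sq_pos_of_ne_zero (sub_ne_zero.2 hr.symm)
  have hcos : r * cos φ ≤ |r| := (le_abs_self _).trans <| by
    rw [abs_mul]; exact mul_le_of_le_one_right (abs_nonneg r) (abs_cos_le_one φ)
  nlinarith [sq_abs r]

lemma continuous_zonal_integrand (n : ℕ) (b : ℝ) {r : ℝ} (hr : |r| ≠ 1) :
    Continuous fun φ ↦ sin φ ^ n * (1 - 2 * r * cos φ + r ^ 2) ^ b :=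
  .mul (by fun_prop) <| .rpow_const (by fun_prop) fun φ ↦
    .inl (one_sub_two_mul_cos_add_sq_pos hr φ).ne'

lemma zonalIntegral_eq_integral_Ioo_pi_div_two (n : ℕ) (b : ℝ) {r : ℝ} (hr : |r| ≠ 1) :
    zonalIntegral n b r = ∫ φ in Ioo 0 (π / 2), sin φ ^ n *
      ((1 - 2 * r * cos φ + r ^ 2) ^ b + (1 + 2 * r * cos φ + r ^ 2) ^ b) := by
  let g (r φ : ℝ) : ℝ := sin φ ^ n * (1 - 2 * r * cos φ + r ^ 2) ^ b
  have hg : Continuous (g r) := continuous_zonal_integrand n b hr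
  have hg' : Continuous (g (-r)) := continuous_zonal_integrand n b (by rwa [abs_neg])
  have hreflect (φ : ℝ) : g r (π - φ) = g (-r) φ := by
    simp only [g, sin_pi_sub, cos_pi_sub]; ring_nf
  calc
    zonalIntegral n b r = ∫ φ in 0..π, g r φ := by
      rw [zonalIntegral, ← integral_Ioc_eq_integral_Ioo,
        ← intervalIntegral.integral_of_le pi_pos.le]
    _ = (∫ φ in 0..π / 2, g r φ) + ∫ φ in π / 2..π, g r φ :=
      (intervalIntegral.integral_add_adjacent_intervals (hg.intervalIntegrable _ _)
        (hg.intervalIntegrable _ _)).symm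
    _ = (∫ φ in 0..π / 2, g r φ) + ∫ φ in 0..π / 2, g (-r) φ := by
      simp only [← hreflect]
      rw [intervalIntegral.integral_comp_sub_left (g r), sub_zero, sub_half]
    _ = ∫ φ in 0..π / 2, (g r φ + g (-r) φ) :=
      (intervalIntegral.integral_add (hg.intervalIntegrable _ _)
        (hg'.intervalIntegrable _ _)).symm
    _ = _ := by
      rw [intervalIntegral.integral_of_le (by positivity), integral_Ioc_eq_integral_Ioo]
      simp only [g, ← mul_add]
      ring_nf

lemma zonal_integrand_nonneg (n : ℕ) (b r : ℝ) {φ : ℝ} (hφ : φ ∈ Ioo 0 π) :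
    0 ≤ sin φ ^ n * (1 - 2 * r * cos φ + r ^ 2) ^ b := by
  have hsq : 1 - 2 * r * cos φ + r ^ 2 = (r - cos φ) ^ 2 + sin φ ^ 2 := by
    linear_combination -sin_sq_add_cos_sq φ
  have := sin_pos_of_mem_Ioo hφ
  rw [hsq]
  positivity

lemma zonalIntegral_nonneg (n : ℕ) (b r : ℝ) : 0 ≤ zonalIntegral n b r :=
  setIntegral_nonneg measurableSet_Ioo fun _ ↦ zonal_integrand_nonneg n b r

lemma lintegral_zonal_density_eq_ofReal (n : ℕ) (b : ℝ) {r : ℝ} (hr₀ : 0 ≤ r) (hr₁ : r ≠ 1) :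
    ∫⁻ φ in Ioo 0 π, ENNReal.ofReal (unitSphereArea (n + 1) * r ^ (n + 1) * sin φ ^ n) *
        ENNReal.ofReal (√(1 - 2 * r * cos φ + r ^ 2) ^ (2 * b)) =
      ENNReal.ofReal (unitSphereArea (n + 1) * r ^ (n + 1) * zonalIntegral n b r) := by
  have hr : |r| ≠ 1 := by rwa [abs_of_nonneg hr₀]
  have hA := unitSphereArea_nonneg (n + 1)
  have hint : IntegrableOn (fun φ ↦ sin φ ^ n * (1 - 2 * r * cos φ + r ^ 2) ^ b) (Ioo 0 π) :=
    (continuous_zonal_integrand n b hr).integrableOn_Icc.mono_set Ioo_subset_Icc_self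
  have hnonneg : 0 ≤ᵐ[volume.restrict (Ioo 0 π)]
      fun φ ↦ sin φ ^ n * (1 - 2 * r * cos φ + r ^ 2) ^ b :=
    (ae_restrict_mem measurableSet_Ioo).mono fun _ ↦ zonal_integrand_nonneg n b r
  rw [ENNReal.ofReal_mul (by positivity), zonalIntegral,
    ofReal_integral_eq_lintegral_ofReal hint hnonneg, ← lintegral_const_mul _ (by fun_prop)]
  refine setLIntegral_congr_fun measurableSet_Ioo fun φ hφ ↦ ?_
  have hsin := sin_pos_of_mem_Ioo hφ
  have hpow : √(1 - 2 * r * cos φ + r ^ 2) ^ (2 * b) = (1 - 2 * r * cos φ + r ^ 2) ^ b := by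
    rw [sqrt_eq_rpow, ← rpow_mul (one_sub_two_mul_cos_add_sq_pos hr φ).le]
    ring_nf
  simp only [hpow]
  rw [← ENNReal.ofReal_mul (by positivity), ← ENNReal.ofReal_mul (by positivity), mul_assoc]

section Integral

variable {E F : Type*} [NormedAddCommGroup E] [InnerProductSpace ℝ E] [FiniteDimensional ℝ E]
  [MeasurableSpace E] [BorelSpace E] [NormedAddCommGroup F] [NormedSpace ℝ F] {n : ℕ}

lemma integral_norm_sub_rpow_smul_norm (hE : finrank ℝ E = n + 2) {e : E} (he : ‖e‖ = 1) (b : ℝ)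
    {f : ℝ → F} (hf : AEStronglyMeasurable f (volume.restrict (Ioi 0))) :
    ∫ y : E, ‖e - y‖ ^ (2 * b) • f ‖y‖ =
      ∫ r in Ioi 0, (unitSphereArea (n + 1) * r ^ (n + 1) * zonalIntegral n b r) • f r := by
  let w (t : ℝ) : ℝ≥0∞ := ENNReal.ofReal (t ^ (2 * b))
  let D (r : ℝ) : ℝ≥0∞ := ∫⁻ φ in Ioo 0 π,
    ENNReal.ofReal (unitSphereArea (n + 1) * r ^ (n + 1) * sin φ ^ n) *
      w √(1 - 2 * r * cos φ + r ^ 2)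
  have hD : Measurable D := measurable_lintegral_zonal_density n (by fun_prop)
  have hD_eq : ∀ᵐ r ∂volume.restrict (Ioi 0), 0 < r ∧
      D r = ENNReal.ofReal (unitSphereArea (n + 1) * r ^ (n + 1) * zonalIntegral n b r) := by
    filter_upwards [ae_restrict_mem measurableSet_Ioi, Measure.ae_ne _ 1] with r hr₀ hr₁
    exact ⟨hr₀, lintegral_zonal_density_eq_ofReal n b (le_of_lt hr₀) hr₁⟩
  have hmap : (volume.withDensity fun y : E ↦ w ‖e - y‖).map norm =
      (volume.restrict (Ioi 0)).withDensity D :=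
    map_norm_withDensity_norm_sub hE he (by fun_prop)
  calc
    ∫ y : E, ‖e - y‖ ^ (2 * b) • f ‖y‖
      = ∫ y : E, f ‖y‖ ∂volume.withDensity fun y ↦ w ‖e - y‖ := by
        rw [integral_withDensity_eq_integral_toReal_smul (by fun_prop) (by simp [w])]
        simp only [w, ENNReal.toReal_ofReal (rpow_nonneg (norm_nonneg _) _)]
    _ = ∫ r, f r ∂(volume.restrict (Ioi 0)).withDensity D := by
      rw [← hmap, integral_map (by fun_prop)]
      exact hmap ▸ hf.mono_ac (withDensity_absolutelyContinuous _ _)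
    _ = ∫ r in Ioi 0, (D r).toReal • f r :=
      integral_withDensity_eq_integral_toReal_smul hD
        (hD_eq.mono fun r hr ↦ hr.2 ▸ ENNReal.ofReal_lt_top) f
    _ = _ := by
      refine integral_congr_ae (hD_eq.mono fun r ⟨hr, h⟩ ↦ ?_)
      have hA := unitSphereArea_nonneg (n + 1)
      have hJ := zonalIntegral_nonneg n b r
      simp only [h, ENNReal.toReal_ofReal (show
        0 ≤ unitSphereArea (n + 1) * r ^ (n + 1) * zonalIntegral n b r by positivity)]

lemma integral_norm_sub_rpow_smul_norm_div (hE : finrank ℝ E = n + 2) {ξ : E} (hξ : ξ ≠ 0) (b : ℝ)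
    {f : ℝ → F} (hf : AEStronglyMeasurable f (volume.restrict (Ioi 0))) :
    ∫ η : E, ‖ξ - η‖ ^ (2 * b) • f (‖η‖ / ‖ξ‖) =
      ‖ξ‖ ^ (n + 2 + 2 * b) •
        ∫ r in Ioi 0, (unitSphereArea (n + 1) * r ^ (n + 1) * zonalIntegral n b r) • f r := by
  have hL : 0 < ‖ξ‖ := norm_pos_iff.2 hξ
  have he : ‖‖ξ‖⁻¹ • ξ‖ = 1 := norm_smul_inv_norm hξ
  let G (y : E) : F := ‖‖ξ‖⁻¹ • ξ - y‖ ^ (2 * b) • f ‖y‖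
  have hG (η : E) : ‖ξ - η‖ ^ (2 * b) • f (‖η‖ / ‖ξ‖) = ‖ξ‖ ^ (2 * b) • G (‖ξ‖⁻¹ • η) := by
    have hη : ‖‖ξ‖⁻¹ • η‖ = ‖η‖ / ‖ξ‖ := by rw [norm_smul, norm_inv, norm_norm, inv_mul_eq_div]
    have hsub : ‖‖ξ‖⁻¹ • ξ - ‖ξ‖⁻¹ • η‖ = ‖ξ‖⁻¹ * ‖ξ - η‖ := by
      rw [← smul_sub, norm_smul, norm_inv, norm_norm]
    simp only [G, hη, hsub, smul_smul]
    rw [← mul_rpow hL.le (by positivity), mul_inv_cancel_left₀ hL.ne']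
  calc
    ∫ η, ‖ξ - η‖ ^ (2 * b) • f (‖η‖ / ‖ξ‖) = ‖ξ‖ ^ (2 * b) • ‖ξ‖ ^ (n + 2) • ∫ y, G y := by
      simp only [hG]
      rw [integral_smul, Measure.integral_comp_inv_smul_of_nonneg volume G hL.le, hE]
    _ = ‖ξ‖ ^ (n + 2 + 2 * b) • ∫ y, G y := by
      rw [smul_smul, ← rpow_natCast, ← rpow_add hL]
      push_cast
      rw [add_comm]
    _ = _ := by rw [integral_norm_sub_rpow_smul_norm hE he b hf]

end Integral

lemma unitSphereArea_mul_cdg (n : ℕ) (γ : ℝ) :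
    unitSphereArea (n + 1) * cdg (n + 2) γ = Cbar (n + 2) γ := by
  have hpi : √π ^ (n + 1) * π ^ (-((n : ℝ) + 2) / 2) = 1 / √π := by
    rw [sqrt_eq_rpow, ← rpow_natCast, ← rpow_mul pi_pos.le, ← rpow_add pi_pos, one_div (π ^ _),
      ← rpow_neg pi_pos.le]
    congr 1
    push_cast
    ring
  unfold unitSphereArea cdg Cbar
  push_cast
  rw [show ((n : ℝ) + 2 - 1) / 2 = (n + 1) / 2 by ring,
    show ((n : ℝ) + 2 + 1 - 2 * γ) / 2 = (n + 2 + 1) / 2 - γ by ring,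
    show 2 * (((n : ℝ) + 2 + 1) / 2 - γ) - (n + 2) / 2 = (n + 2 + 2 - 4 * γ) / 2 by ring,
    div_eq_mul_one_div 2 √π, ← hpi]
  simp only [div_eq_mul_inv, mul_inv]
  ring

lemma Hker_eq_mul_norm_div_rpow (d : ℕ) (γ : ℝ) {ξ : EuclideanSpace ℝ (Fin d)} (hξ : ξ ≠ 0)
    (η : EuclideanSpace ℝ (Fin d)) :
    Hker d γ η ξ = cdg d γ * ‖ξ‖ ^ (1 - 2 * γ) *
      (‖ξ - η‖ ^ (2 * γ - d - 1) * (‖η‖ / ‖ξ‖) ^ (2 * γ - d - 1)) := by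
  have hL : 0 < ‖ξ‖ := norm_pos_iff.2 hξ
  have hexp : ‖ξ‖ ^ ((d : ℝ) + 2 - 4 * γ) = ‖ξ‖ ^ (1 - 2 * γ) / ‖ξ‖ ^ (2 * γ - d - 1) := by
    rw [← rpow_sub hL]
    ring_nf
  rw [Hker, div_rpow (norm_nonneg η) hL.le, hexp]
  ring

section Kernel

variable {F : Type*} [NormedAddCommGroup F] [NormedSpace ℝ F]

lemma integral_Hker_smul_norm_div (n : ℕ) (γ : ℝ) {ξ : EuclideanSpace ℝ (Fin (n + 2))}
    (hξ : ξ ≠ 0) {k : ℝ → F} (hk : AEStronglyMeasurable k (volume.restrict (Ioi 0))) :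
    ∫ η, Hker (n + 2) γ η ξ • k (‖η‖ / ‖ξ‖) =
      ∫ r in Ioi 0, (Cbar (n + 2) γ * r ^ (2 * γ - 2) *
        zonalIntegral n (-((((n + 2 : ℕ) : ℝ) + 1) / 2 - γ)) r) • k r := by
  let q : ℝ := 2 * γ - (n + 2 : ℕ) - 1
  let b : ℝ := -((((n + 2 : ℕ) : ℝ) + 1) / 2 - γ)
  have hqb : q = 2 * b := by ring
  calc
    ∫ η, Hker (n + 2) γ η ξ • k (‖η‖ / ‖ξ‖)
      = (cdg (n + 2) γ * ‖ξ‖ ^ (1 - 2 * γ)) •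
          ∫ η, ‖ξ - η‖ ^ (2 * b) • (‖η‖ / ‖ξ‖) ^ q • k (‖η‖ / ‖ξ‖) := by
        rw [← hqb, ← integral_smul]
        simp only [Hker_eq_mul_norm_div_rpow _ γ hξ, mul_smul, q]
    _ = cdg (n + 2) γ • ∫ r in Ioi 0,
          (unitSphereArea (n + 1) * r ^ (n + 1) * zonalIntegral n b r) • r ^ q • k r := by
        have hexp : 1 - 2 * γ + (n + 2 + 2 * b) = 0 := by simp only [b]; push_cast; ring
        rw [integral_norm_sub_rpow_smul_norm_div finrank_euclideanSpace_fin hξ b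
          (f := fun r ↦ r ^ q • k r) (.smul (by fun_prop) hk), smul_smul, mul_assoc,
          ← rpow_add (norm_pos_iff.2 hξ), hexp, rpow_zero, mul_one]
    _ = _ := by
      rw [← integral_smul]
      refine setIntegral_congr_fun measurableSet_Ioi fun r hr ↦ ?_
      have hpow : r ^ (2 * γ - 2) = r ^ (n + 1) * r ^ q := by
        rw [← rpow_natCast, ← rpow_add hr]
        congr 1
        simp only [q]
        push_cast
        ring
      simp only [hpow, ← unitSphereArea_mul_cdg, smul_smul, b]
      congr 1
      ring

theorem stmt3_general (d : ℕ) (hd : 2 ≤ d) (γ : ℝ) (ξ : EuclideanSpace ℝ (Fin d)) (hξ : ξ ≠ 0)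
    (k : ℝ → F) (hk : AEStronglyMeasurable k (volume.restrict (Ioi 0))) :
    ∫ η, Hker d γ η ξ • k (‖η‖ / ‖ξ‖) =
      ∫ r in Ioi (0 : ℝ), (Cbar d γ * r ^ (2 * γ - 2) *
        ∫ φ in Ioo (0 : ℝ) (π / 2), sin φ ^ (d - 2) *
          ((1 - 2 * r * cos φ + r ^ 2) ^ (-(((d : ℝ) + 1) / 2 - γ))
            + (1 + 2 * r * cos φ + r ^ 2) ^ (-(((d : ℝ) + 1) / 2 - γ)))) • k r := by
  obtain ⟨n, rfl⟩ := Nat.exists_eq_add_of_le' hd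
  rw [integral_Hker_smul_norm_div n γ hξ hk]
  refine integral_congr_ae ?_
  filter_upwards [ae_restrict_mem measurableSet_Ioi, Measure.ae_ne _ 1] with r hr₀ hr₁
  have hr : |r| ≠ 1 := by rwa [abs_of_pos hr₀]
  rw [zonalIntegral_eq_integral_Ioo_pi_div_two _ _ hr, Nat.add_sub_cancel]

end Kernel

theorem stmt3 (d : ℕ) (hd : 2 ≤ d) (γ : ℝ)
    (hγ : γ ∈ Set.Ioo (1/2 : ℝ) (((d : ℝ) + 2)/4))
    (ξ : EuclideanSpace ℝ (Fin d)) (hξ : ξ ≠ 0)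
    (k : ℝ → ℝ) (hk : Measurable k) (hbd : ∃ C : ℝ, ∀ x, |k x| ≤ C) :
    ∫ η, k (‖η‖ / ‖ξ‖) * Hker d γ η ξ =
      ∫ r in Set.Ioi (0 : ℝ), k r *
        (Cbar d γ * r ^ (2*γ - 2) *
          ∫ φ in Set.Ioo (0 : ℝ) (Real.pi/2), (Real.sin φ) ^ (d - 2) *
            ((1 - 2*r*Real.cos φ + r^2) ^ (-(((d : ℝ) + 1)/2 - γ))
              + (1 + 2*r*Real.cos φ + r^2) ^ (-(((d : ℝ) + 1)/2 - γ)))) := by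
  simpa only [smul_eq_mul, mul_comm] using stmt3_general d hd γ ξ hξ k hk.aestronglyMeasurable
end

section
/- Let d ≥ 2 be an integer and γ ∈ [(d+3)/6, (d+2)/4). Then for every ξ ∈ ℝ^d \ {0} and every real b > 0, the integral ∫_{ℝ^d} (|η|/|ξ|)^b H(η|ξ) dη (with value in [0,∞]) is strictly greater than 1. -/
open MeasureTheory Set

/-!
Writing `g(a) = Γ(d/2 - a) / Γ(a)`, the Riesz composition formula
`∫ |η| ^ (-2a) |ξ - η| ^ (-2b) dη = π ^ (d/2) g(a) g(b) g(c) |ξ| ^ (2c - d)`, `a + b + c = d`,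
has a constant symmetric in `a`, `b`, `c`. The moment `E[R ^ β]` is, up to normalization, the case
`a = (d + 1 - 2γ - β) / 2`, `b = (d + 1 - 2γ) / 2`, `c = 2γ - 1 + β / 2`, and exchanging `a` and
`c` is the reflection `β ↦ d + 3 - 6γ - β`. Since `β ↦ E[R ^ β]` is strictly convex, equals `1` at
`β = 0` and is invariant under this reflection, it exceeds `1` off the interval between `0` and
`d + 3 - 6γ`; under the hypothesis on `γ` this interval contains no `β > 0`. Where the formula does
not apply because the moment may be infinite, Jensen's inequality reduces to a smaller `|β|`.

The composition formula comes from the subordination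
`Γ(a) |η| ^ (-2a) = ∫₀^∞ s ^ (-a - 1) exp (-|η|² / s) ds`: convolving Gaussians adds the times, so
what remains is an integral over `s, t > 0` of powers of `s` and `t` times a function of `s + t`.
-/

open Real Module
open scoped ENNReal

section Gamma

lemma lintegral_Ioi_eq_mul_lintegral_comp_mul (f : ℝ → ℝ≥0∞) {c : ℝ} (hc : 0 < c) :
    ∫⁻ x in Ioi 0, f x = ENNReal.ofReal c * ∫⁻ x in Ioi 0, f (c * x) := by
  have himage : (c * ·) '' Ioi (0 : ℝ) = Ioi 0 := by rw [image_mul_left_Ioi hc, mul_zero]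
  have hderiv : ∀ x ∈ Ioi (0 : ℝ), HasDerivWithinAt (c * ·) c (Ioi 0) x := fun x _ => by
    simpa using ((hasDerivAt_id x).const_mul c).hasDerivWithinAt
  have hsubst := lintegral_image_eq_lintegral_abs_deriv_mul measurableSet_Ioi hderiv
    (mul_right_injective₀ hc.ne').injOn f
  rwa [himage, abs_of_pos hc, lintegral_const_mul' _ _ ENNReal.ofReal_ne_top] at hsubst

lemma lintegral_rpow_mul_exp_neg_div_Ioi {p r : ℝ} (hp : 0 < p) (hr : 0 < r) :
    ∫⁻ x in Ioi 0, ENNReal.ofReal (x ^ (-p - 1) * exp (-(r / x))) =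
      ENNReal.ofReal (Gamma p * r ^ (-p)) := by
  have hint : ∫ x in Ioi 0, x ^ (-p - 1) * exp (-(r / x)) = Gamma p * r ^ (-p) := by
    rw [rpow_neg hr.le, ← inv_rpow hr.le, inv_eq_one_div, mul_comm,
      ← integral_rpow_mul_exp_neg_mul_Ioi hp hr,
      ← integral_comp_rpow_Ioi _ (neg_ne_zero.mpr one_ne_zero)]
    refine setIntegral_congr_fun measurableSet_Ioi fun x (hx : 0 < x) => ?_
    simp only [abs_neg, abs_one, one_mul, smul_eq_mul]
    rw [← mul_assoc, ← rpow_mul hx.le, ← rpow_add hx, rpow_neg_one, div_eq_mul_inv,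
      inv_inv]
    congr 2
    ring
  have hpos : 0 < Gamma p * r ^ (-p) := mul_pos (Gamma_pos_of_pos hp) (rpow_pos_of_pos hr _)
  rw [← hint, ofReal_integral_eq_lintegral_ofReal
    (Integrable.of_integral_ne_zero (hint ▸ hpos.ne'))]
  filter_upwards [ae_restrict_mem measurableSet_Ioi] with x (hx : 0 < x)
  positivity

lemma lintegral_rpow_mul_exp_neg_Ioi {p : ℝ} (hp : 0 < p) :
    ∫⁻ x in Ioi 0, ENNReal.ofReal (x ^ (p - 1) * exp (-x)) = ENNReal.ofReal (Gamma p) := by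
  simp_rw [Gamma_eq_integral hp, mul_comm (_ ^ (p - 1))]
  rw [ofReal_integral_eq_lintegral_ofReal (GammaIntegral_convergent hp)]
  filter_upwards [ae_restrict_mem measurableSet_Ioi] with x (hx : 0 < x)
  positivity

lemma lintegral_lintegral_rpow_mul_comp_add (p q : ℝ) {F : ℝ → ℝ≥0∞} (hF : Measurable F) :
    ∫⁻ x in Ioi 0, ∫⁻ y in Ioi 0, ENNReal.ofReal (x ^ (p - 1) * y ^ (q - 1)) * F (x + y) =
      (∫⁻ w in Ioi 0, ENNReal.ofReal (w ^ (q - 1) * (1 + w) ^ (-(p + q)))) *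
        ∫⁻ s in Ioi 0, ENNReal.ofReal (s ^ (p + q - 1)) * F s := by
  calc
    _ = ∫⁻ x in Ioi 0, ∫⁻ w in Ioi 0,
          ENNReal.ofReal (x ^ (p + q - 1) * w ^ (q - 1)) * F ((1 + w) * x) := by
      refine setLIntegral_congr_fun measurableSet_Ioi fun x (hx : 0 < x) => ?_
      rw [lintegral_Ioi_eq_mul_lintegral_comp_mul _ hx,
        ← lintegral_const_mul' _ _ ENNReal.ofReal_ne_top]
      refine setLIntegral_congr_fun measurableSet_Ioi fun w (hw : 0 < w) => ?_
      rw [← mul_assoc, ← ENNReal.ofReal_mul hx.le, mul_rpow hx.le hw.le,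
        show p + q - 1 = 1 + (p - 1) + (q - 1) by ring, rpow_add hx, rpow_add hx, rpow_one]
      ring_nf
    _ = ∫⁻ w in Ioi 0, ∫⁻ x in Ioi 0,
          ENNReal.ofReal (x ^ (p + q - 1) * w ^ (q - 1)) * F ((1 + w) * x) :=
      lintegral_lintegral_swap (by fun_prop)
    _ = ∫⁻ w in Ioi 0, ENNReal.ofReal (w ^ (q - 1) * (1 + w) ^ (-(p + q))) *
          ∫⁻ s in Ioi 0, ENNReal.ofReal (s ^ (p + q - 1)) * F s := by
      refine setLIntegral_congr_fun measurableSet_Ioi fun w (hw : 0 < w) => ?_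
      have hw1 : 0 < 1 + w := by positivity
      rw [lintegral_Ioi_eq_mul_lintegral_comp_mul (fun s => _ * F s) hw1, ← mul_assoc,
        ← ENNReal.ofReal_mul (by positivity), ← lintegral_const_mul' _ _ ENNReal.ofReal_ne_top]
      refine setLIntegral_congr_fun measurableSet_Ioi fun x (hx : 0 < x) => ?_
      rw [← mul_assoc, ← ENNReal.ofReal_mul (by positivity), mul_rpow hw1.le hx.le,
        rpow_sub_one hw1.ne', rpow_neg hw1.le]
      congr 2
      field_simp
    _ = _ := lintegral_mul_const _ (by fun_prop)

lemma lintegral_rpow_mul_one_add_rpow_Ioi {p q : ℝ} (hp : 0 < p) (hq : 0 < q) :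
    ∫⁻ w in Ioi 0, ENNReal.ofReal (w ^ (q - 1) * (1 + w) ^ (-(p + q))) =
      ENNReal.ofReal (Gamma p * Gamma q / Gamma (p + q)) := by
  have hpq : 0 < Gamma (p + q) := Gamma_pos_of_pos (add_pos hp hq)
  have hprod : ENNReal.ofReal (Gamma p * Gamma q) =
      ∫⁻ x in Ioi 0, ∫⁻ y in Ioi 0,
        ENNReal.ofReal (x ^ (p - 1) * y ^ (q - 1)) * ENNReal.ofReal (exp (-(x + y))) := by
    rw [ENNReal.ofReal_mul (Gamma_nonneg_of_nonneg hp.le), ← lintegral_rpow_mul_exp_neg_Ioi hp,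
      ← lintegral_rpow_mul_exp_neg_Ioi hq, ← lintegral_mul_const _ (by fun_prop)]
    refine setLIntegral_congr_fun measurableSet_Ioi fun x (hx : 0 < x) => ?_
    rw [← lintegral_const_mul' _ _ ENNReal.ofReal_ne_top]
    refine setLIntegral_congr_fun measurableSet_Ioi fun y (hy : 0 < y) => ?_
    rw [← ENNReal.ofReal_mul (by positivity), ← ENNReal.ofReal_mul (by positivity), neg_add,
      exp_add]
    ring_nf
  rw [lintegral_lintegral_rpow_mul_comp_add p q (F := fun s => ENNReal.ofReal (exp (-s)))
    (by fun_prop)] at hprod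
  simp_rw [← ENNReal.ofReal_mul' (exp_pos _).le] at hprod
  rw [lintegral_rpow_mul_exp_neg_Ioi (add_pos hp hq)] at hprod
  rw [ENNReal.ofReal_div_of_pos hpq, hprod,
    ENNReal.mul_div_cancel_right (ENNReal.ofReal_pos.mpr hpq).ne' ENNReal.ofReal_ne_top]

end Gamma

lemma lintegral_lintegral_mul_lintegral {α β δ : Type*} [MeasurableSpace α] [MeasurableSpace β]
    [MeasurableSpace δ] {μ : Measure α} {ν : Measure β} {ρ : Measure δ} [SFinite μ] [SFinite ν]
    [SFinite ρ] {f : α → δ → ℝ≥0∞} {g : β → δ → ℝ≥0∞} (hf : Measurable (Function.uncurry f))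
    (hg : Measurable (Function.uncurry g)) :
    ∫⁻ z, (∫⁻ x, f x z ∂μ) * ∫⁻ y, g y z ∂ν ∂ρ = ∫⁻ x, ∫⁻ y, ∫⁻ z, f x z * g y z ∂ρ ∂ν ∂μ := by
  calc
    _ = ∫⁻ z, ∫⁻ x, f x z * ∫⁻ y, g y z ∂ν ∂μ ∂ρ := by
      refine lintegral_congr fun z => (lintegral_mul_const _ ?_).symm
      fun_prop
    _ = ∫⁻ x, ∫⁻ z, f x z * ∫⁻ y, g y z ∂ν ∂ρ ∂μ :=
      lintegral_lintegral_swap (by fun_prop)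
    _ = ∫⁻ x, ∫⁻ z, ∫⁻ y, f x z * g y z ∂ν ∂ρ ∂μ := by
      refine lintegral_congr fun x => lintegral_congr fun z => (lintegral_const_mul _ ?_).symm
      fun_prop
    _ = _ := lintegral_congr fun x => lintegral_lintegral_swap (by fun_prop)

section Riesz

/-- The factor `Γ(n/2 - a) / Γ(a)`: up to powers of `2` and `π`, it is the constant that turns
`|x| ^ (-2a)` on `ℝⁿ` into its Fourier transform `|x| ^ (2a - n)`. -/
noncomputable def rieszGamma (n a : ℝ) : ℝ :=
  Gamma (n / 2 - a) / Gamma a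

lemma rieszGamma_pos {n a : ℝ} (ha : 0 < a) (han : a < n / 2) : 0 < rieszGamma n a :=
  div_pos (Gamma_pos_of_pos (sub_pos.mpr han)) (Gamma_pos_of_pos ha)

variable {E : Type*} [NormedAddCommGroup E]

lemma ofReal_norm_rpow_eq_lintegral_exp {a : ℝ} (ha : 0 < a) {x : E} (hx : x ≠ 0) :
    ENNReal.ofReal (‖x‖ ^ (-2 * a)) = ENNReal.ofReal (Gamma a)⁻¹ *
      ∫⁻ s in Ioi 0, ENNReal.ofReal (s ^ (-a - 1) * exp (-(‖x‖ ^ 2 / s))) := by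
  have hΓ : 0 < Gamma a := Gamma_pos_of_pos ha
  have hnorm : 0 < ‖x‖ := norm_pos_iff.mpr hx
  rw [lintegral_rpow_mul_exp_neg_div_Ioi ha (by positivity), ← ENNReal.ofReal_mul (by positivity),
    inv_mul_cancel_left₀ hΓ.ne', ← rpow_natCast_mul hnorm.le]
  norm_num

variable [InnerProductSpace ℝ E]

lemma norm_sq_div_add_norm_sub_sq_div {s t : ℝ} (hs : 0 < s) (ht : 0 < t) (ξ η : E) :
    ‖η‖ ^ 2 / s + ‖ξ - η‖ ^ 2 / t =
      (s + t) / (s * t) * ‖η - (s / (s + t)) • ξ‖ ^ 2 + ‖ξ‖ ^ 2 / (s + t) := by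
  rw [norm_sub_sq_real, norm_sub_sq_real, norm_smul, inner_smul_right, real_inner_comm η ξ,
    norm_of_nonneg (by positivity)]
  field_simp
  ring

variable [FiniteDimensional ℝ E] [MeasurableSpace E] [BorelSpace E]

lemma lintegral_exp_neg_mul_norm_sq {r : ℝ} (hr : 0 < r) :
    ∫⁻ v : E, ENNReal.ofReal (exp (-r * ‖v‖ ^ 2)) =
      ENNReal.ofReal ((π / r) ^ (finrank ℝ E / 2 : ℝ)) := by
  have hint := GaussianFourier.integral_rexp_neg_mul_sq_norm (V := E) hr
  have hpos : 0 < (π / r) ^ (finrank ℝ E / 2 : ℝ) := by positivity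
  rw [← hint, ofReal_integral_eq_lintegral_ofReal
    (Integrable.of_integral_ne_zero (hint ▸ hpos.ne'))]
  exact .of_forall fun v => (exp_pos _).le

lemma lintegral_exp_neg_norm_sq_div_mul {s t : ℝ} (hs : 0 < s) (ht : 0 < t) (ξ : E) :
    ∫⁻ η, ENNReal.ofReal (exp (-(‖η‖ ^ 2 / s)) * exp (-(‖ξ - η‖ ^ 2 / t))) =
      ENNReal.ofReal ((π * (s * t / (s + t))) ^ (finrank ℝ E / 2 : ℝ) *
        exp (-(‖ξ‖ ^ 2 / (s + t)))) := by
  have hexp : ∀ η, exp (-(‖η‖ ^ 2 / s)) * exp (-(‖ξ - η‖ ^ 2 / t)) =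
      exp (-((s + t) / (s * t)) * ‖η - (s / (s + t)) • ξ‖ ^ 2) *
        exp (-(‖ξ‖ ^ 2 / (s + t))) := fun η => by
    rw [← exp_add, ← neg_add, norm_sq_div_add_norm_sub_sq_div hs ht, neg_add, exp_add, neg_mul]
  simp_rw [hexp, ENNReal.ofReal_mul' (exp_pos (-(‖ξ‖ ^ 2 / (s + t)))).le]
  rw [lintegral_mul_const' _ _ ENNReal.ofReal_ne_top, lintegral_sub_right_eq_self
      fun v : E => ENNReal.ofReal (exp (-((s + t) / (s * t)) * ‖v‖ ^ 2)),
    lintegral_exp_neg_mul_norm_sq (by positivity), div_div_eq_mul_div,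
    mul_div_assoc, ← ENNReal.ofReal_mul (by positivity)]

lemma lintegral_rpow_mul_exp_neg_norm_sq_div_mul (a b : ℝ) {s t : ℝ} (hs : 0 < s) (ht : 0 < t)
    (ξ : E) :
    ∫⁻ η, ENNReal.ofReal (s ^ (-a - 1) * exp (-(‖η‖ ^ 2 / s))) *
        ENNReal.ofReal (t ^ (-b - 1) * exp (-(‖ξ - η‖ ^ 2 / t))) =
      ENNReal.ofReal (s ^ (finrank ℝ E / 2 - a - 1) * t ^ (finrank ℝ E / 2 - b - 1)) *
        ENNReal.ofReal (π ^ (finrank ℝ E / 2 : ℝ) *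
          ((s + t) ^ (-(finrank ℝ E / 2 : ℝ)) * exp (-(‖ξ‖ ^ 2 / (s + t))))) := by
  have hst : 0 < s + t := add_pos hs ht
  have hfactor : ∀ η, ENNReal.ofReal (s ^ (-a - 1) * exp (-(‖η‖ ^ 2 / s))) *
        ENNReal.ofReal (t ^ (-b - 1) * exp (-(‖ξ - η‖ ^ 2 / t))) =
      ENNReal.ofReal (s ^ (-a - 1) * t ^ (-b - 1)) *
        ENNReal.ofReal (exp (-(‖η‖ ^ 2 / s)) * exp (-(‖ξ - η‖ ^ 2 / t))) := fun η => by
    rw [← ENNReal.ofReal_mul (by positivity), ← ENNReal.ofReal_mul (by positivity),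
      mul_mul_mul_comm]
  simp_rw [hfactor]
  rw [lintegral_const_mul' _ _ ENNReal.ofReal_ne_top, lintegral_exp_neg_norm_sq_div_mul hs ht,
    ← ENNReal.ofReal_mul (by positivity), ← ENNReal.ofReal_mul (by positivity),
    mul_rpow pi_nonneg (by positivity), div_rpow (by positivity) hst.le, mul_rpow hs.le ht.le,
    sub_sub, sub_sub, sub_eq_add_neg _ (a + 1), sub_eq_add_neg _ (b + 1), rpow_add hs,
    rpow_add ht, rpow_neg hst.le, neg_add', neg_add']
  ring_nf

lemma lintegral_lintegral_exp_mul_lintegral_exp {a b c : ℝ} (ha : a < finrank ℝ E / 2)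
    (hb : b < finrank ℝ E / 2) (hc : c < finrank ℝ E / 2) (habc : a + b + c = finrank ℝ E)
    {ξ : E} (hξ : ξ ≠ 0) :
    ∫⁻ η, (∫⁻ s in Ioi 0, ENNReal.ofReal (s ^ (-a - 1) * exp (-(‖η‖ ^ 2 / s)))) *
        ∫⁻ t in Ioi 0, ENNReal.ofReal (t ^ (-b - 1) * exp (-(‖ξ - η‖ ^ 2 / t))) =
      ENNReal.ofReal (Gamma (finrank ℝ E / 2 - a) * Gamma (finrank ℝ E / 2 - b) / Gamma c *
        (π ^ (finrank ℝ E / 2 : ℝ) *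
          (Gamma (finrank ℝ E / 2 - c) * ‖ξ‖ ^ (2 * c - finrank ℝ E)))) := by
  have hξ0 : 0 < ‖ξ‖ := norm_pos_iff.mpr hξ
  have hΓa : 0 < Gamma (finrank ℝ E / 2 - a) := Gamma_pos_of_pos (sub_pos.mpr ha)
  have hΓb : 0 < Gamma (finrank ℝ E / 2 - b) := Gamma_pos_of_pos (sub_pos.mpr hb)
  have hΓc : 0 < Gamma c := Gamma_pos_of_pos (by linarith)
  set m : ℝ := finrank ℝ E / 2 with hm
  let F : ℝ → ℝ≥0∞ := fun r =>
    ENNReal.ofReal (π ^ m * (r ^ (-m) * exp (-(‖ξ‖ ^ 2 / r))))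
  calc
    _ = ∫⁻ s in Ioi 0, ∫⁻ t in Ioi 0,
          ENNReal.ofReal (s ^ (m - a - 1) * t ^ (m - b - 1)) * F (s + t) := by
      rw [lintegral_lintegral_mul_lintegral (by fun_prop) (by fun_prop)]
      exact setLIntegral_congr_fun measurableSet_Ioi fun s hs =>
        setLIntegral_congr_fun measurableSet_Ioi fun t ht =>
          lintegral_rpow_mul_exp_neg_norm_sq_div_mul a b hs ht ξ
    _ = ENNReal.ofReal (Gamma (m - a) * Gamma (m - b) / Gamma c) *
          ∫⁻ r in Ioi 0, ENNReal.ofReal (r ^ (c - 1)) * F r := by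
      rw [lintegral_lintegral_rpow_mul_comp_add _ _ (by fun_prop),
        lintegral_rpow_mul_one_add_rpow_Ioi (sub_pos.mpr ha) (sub_pos.mpr hb),
        show (m - a) + (m - b) = c by linarith]
    _ = ENNReal.ofReal (Gamma (m - a) * Gamma (m - b) / Gamma c) *
          ENNReal.ofReal (π ^ m * (Gamma (m - c) * (‖ξ‖ ^ 2) ^ (-(m - c)))) := by
      congr 1
      rw [ENNReal.ofReal_mul (by positivity), ← lintegral_rpow_mul_exp_neg_div_Ioi (sub_pos.mpr hc)
        (pow_pos hξ0 2), ← lintegral_const_mul' _ _ ENNReal.ofReal_ne_top]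
      refine setLIntegral_congr_fun measurableSet_Ioi fun r (hr : 0 < r) => ?_
      rw [← ENNReal.ofReal_mul (by positivity), ← ENNReal.ofReal_mul (by positivity),
        show -(m - c) - 1 = (c - 1) + -m by ring, rpow_add hr]
      ring_nf
    _ = _ := by
      rw [← ENNReal.ofReal_mul (by positivity), ← rpow_natCast_mul hξ0.le,
        show ((2 : ℕ) : ℝ) * -(m - c) = 2 * c - finrank ℝ E by rw [hm]; push_cast; ring]

theorem lintegral_norm_rpow_mul_norm_sub_rpow {a b c : ℝ} (ha : a < finrank ℝ E / 2)
    (hb : b < finrank ℝ E / 2) (hc : c < finrank ℝ E / 2) (habc : a + b + c = finrank ℝ E)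
    {ξ : E} (hξ : ξ ≠ 0) :
    ∫⁻ η, ENNReal.ofReal (‖η‖ ^ (-2 * a) * ‖ξ - η‖ ^ (-2 * b)) =
      ENNReal.ofReal (π ^ (finrank ℝ E / 2 : ℝ) * (rieszGamma (finrank ℝ E) a *
        rieszGamma (finrank ℝ E) b * rieszGamma (finrank ℝ E) c) *
          ‖ξ‖ ^ (2 * c - finrank ℝ E)) := by
  have : Nontrivial E := nontrivial_of_ne ξ 0 hξ
  have ha0 : 0 < a := by linarith
  have hb0 : 0 < b := by linarith
  calc
    _ = ENNReal.ofReal ((Gamma a)⁻¹ * (Gamma b)⁻¹) * ∫⁻ η,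
          (∫⁻ s in Ioi 0, ENNReal.ofReal (s ^ (-a - 1) * exp (-(‖η‖ ^ 2 / s)))) *
            ∫⁻ t in Ioi 0, ENNReal.ofReal (t ^ (-b - 1) * exp (-(‖ξ - η‖ ^ 2 / t))) := by
      rw [← lintegral_const_mul' _ _ ENNReal.ofReal_ne_top]
      refine lintegral_congr_ae ?_
      filter_upwards [Measure.ae_ne volume 0, Measure.ae_ne volume ξ] with η hη0 hηξ
      rw [ENNReal.ofReal_mul (by positivity), ofReal_norm_rpow_eq_lintegral_exp ha0 hη0,
        ofReal_norm_rpow_eq_lintegral_exp hb0 (sub_ne_zero.mpr hηξ.symm),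
        ENNReal.ofReal_mul (by positivity), mul_mul_mul_comm]
    _ = _ := by
      rw [lintegral_lintegral_exp_mul_lintegral_exp ha hb hc habc hξ,
        ← ENNReal.ofReal_mul (by positivity)]
      simp only [rieszGamma]
      ring_nf

end Riesz

section Moments

variable {Ω : Type*} [MeasurableSpace Ω] {μ : Measure Ω} [IsProbabilityMeasure μ]

lemma one_lt_lintegral_rpow {f : Ω → ℝ≥0∞} (hf : AEMeasurable f μ) {k : ℝ} (hk : 1 ≤ k)
    (h : 1 < ∫⁻ ω, f ω ∂μ) : 1 < ∫⁻ ω, f ω ^ k ∂μ := by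
  have hk0 : 0 < k := one_pos.trans_le hk
  have hmono := eLpNorm'_le_eLpNorm'_of_exponent_le one_pos hk μ hf.aestronglyMeasurable
  simp only [eLpNorm'_eq_lintegral_enorm, enorm_eq_self, ENNReal.rpow_one, div_one] at hmono
  by_contra! hle
  exact (h.trans_le hmono).not_ge (ENNReal.rpow_le_one hle (one_div_pos.mpr hk0).le)

lemma add_lt_mul_rpow_neg_add_mul_rpow {p q r : ℝ} (hp : 0 < p) (hq : 0 < q) (hr : 0 < r)
    (hr1 : r ≠ 1) : p + q < p * r ^ (-q) + q * r ^ p := by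
  have hlog : log r ≠ 0 := log_ne_zero_of_pos_of_ne_one hr hr1
  rw [rpow_def_of_pos hr, rpow_def_of_pos hr]
  have hneg := add_one_lt_exp (mul_ne_zero hlog (neg_ne_zero.mpr hq.ne'))
  have hpos := add_one_lt_exp (mul_ne_zero hlog hp.ne')
  linear_combination p * hneg + q * hpos

lemma one_lt_lintegral_rpow_of_eq_rpow_neg {X : Ω → ℝ} (hX : Measurable X)
    (hpos : ∀ᵐ ω ∂μ, 0 < X ω) (hne : ∃ᵐ ω ∂μ, X ω ≠ 1) {p q : ℝ} (hp : 0 < p) (hq : 0 < q)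
    (heq : ∫⁻ ω, ENNReal.ofReal (X ω ^ (-q)) ∂μ = ∫⁻ ω, ENNReal.ofReal (X ω ^ p) ∂μ) :
    1 < ∫⁻ ω, ENNReal.ofReal (X ω ^ p) ∂μ := by
  have hlt : ∀ᵐ ω ∂μ, X ω ≠ 1 → ENNReal.ofReal (p + q) <
      ENNReal.ofReal p * ENNReal.ofReal (X ω ^ (-q)) +
        ENNReal.ofReal q * ENNReal.ofReal (X ω ^ p) := by
    filter_upwards [hpos] with ω hω hω1
    rw [← ENNReal.ofReal_mul hp.le, ← ENNReal.ofReal_mul hq.le,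
      ← ENNReal.ofReal_add (by positivity) (by positivity),
      ENNReal.ofReal_lt_ofReal_iff (by positivity)]
    exact add_lt_mul_rpow_neg_add_mul_rpow hp hq hω hω1
  have hint : ∫⁻ _, ENNReal.ofReal (p + q) ∂μ <
      ∫⁻ ω, (ENNReal.ofReal p * ENNReal.ofReal (X ω ^ (-q)) +
        ENNReal.ofReal q * ENNReal.ofReal (X ω ^ p)) ∂μ := by
    refine lintegral_strict_mono_of_ae_le_of_frequently_ae_lt (by fun_prop) (by simp) ?_
      ((hne.and_eventually hlt).mono fun ω hω => (hω.2 hω.1).ne)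
    filter_upwards [hlt] with ω hω
    rcases eq_or_ne (X ω) 1 with hω1 | hω1
    · simp [hω1, ENNReal.ofReal_add hp.le hq.le]
    · exact (hω hω1).le
  rw [lintegral_const, measure_univ, lintegral_add_left (by fun_prop),
    lintegral_const_mul _ (by fun_prop), lintegral_const_mul _ (by fun_prop), heq, ← add_mul,
    ← ENNReal.ofReal_add hp.le hq.le] at hint
  exact lt_of_mul_lt_mul_left' hint

end Moments

section MajorizingKernel

variable {d : ℕ} {γ : ℝ} {ξ : EuclideanSpace ℝ (Fin d)} {β : ℝ}

/-- The probability law `H(·|ξ)`, the measure on `ℝᵈ` with Lebesgue density `Hker d γ · ξ`. -/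
noncomputable def majorizingMeasure (d : ℕ) (γ : ℝ) (ξ : EuclideanSpace ℝ (Fin d)) :
    Measure (EuclideanSpace ℝ (Fin d)) :=
  volume.withDensity fun η => ENNReal.ofReal (Hker d γ η ξ)

/-- The moment `E[R ^ β]` of the ratio `R = |η| / |ξ|` under `H(·|ξ)`, possibly infinite. -/
noncomputable def ratioMoment (d : ℕ) (γ : ℝ) (ξ : EuclideanSpace ℝ (Fin d)) (β : ℝ) : ℝ≥0∞ :=
  ∫⁻ η, ENNReal.ofReal ((‖η‖ / ‖ξ‖) ^ β) ∂majorizingMeasure d γ ξ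

lemma ratioMoment_eq_lintegral_mul_Hker (d : ℕ) (γ : ℝ) (ξ : EuclideanSpace ℝ (Fin d)) (β : ℝ) :
    ratioMoment d γ ξ β = ∫⁻ η, ENNReal.ofReal ((‖η‖ / ‖ξ‖) ^ β * Hker d γ η ξ) := by
  have hH : Measurable fun η => ENNReal.ofReal (Hker d γ η ξ) := by
    unfold Hker
    fun_prop
  rw [ratioMoment, majorizingMeasure, lintegral_withDensity_eq_lintegral_mul _ hH (by fun_prop)]
  refine lintegral_congr fun η => ?_
  rw [Pi.mul_apply, mul_comm, ENNReal.ofReal_mul (by positivity)]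

lemma cdg_eq_inv (d : ℕ) (γ : ℝ) :
    cdg d γ = (π ^ (d / 2 : ℝ) *
      (rieszGamma d ((d + 1 - 2 * γ) / 2) ^ 2 * rieszGamma d (2 * γ - 1)))⁻¹ := by
  rw [cdg, rieszGamma, rieszGamma, neg_div, rpow_neg pi_nonneg,
    show (d / 2 - (d + 1 - 2 * γ) / 2 : ℝ) = (2 * γ - 1) / 2 by ring,
    show (d / 2 - (2 * γ - 1) : ℝ) = (d + 2 - 4 * γ) / 2 by ring, mul_inv, mul_inv, ← inv_pow,
    inv_div, inv_div]
  ring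

lemma rpow_mul_Hker (hξ : ξ ≠ 0) {η : EuclideanSpace ℝ (Fin d)} (hη : η ≠ 0) :
    (‖η‖ / ‖ξ‖) ^ β * Hker d γ η ξ = cdg d γ * ‖ξ‖ ^ (d + 2 - 4 * γ - β) *
      (‖η‖ ^ (-2 * ((d + 1 - 2 * γ - β) / 2)) * ‖ξ - η‖ ^ (-2 * ((d + 1 - 2 * γ) / 2))) := by
  have hξ0 : 0 < ‖ξ‖ := norm_pos_iff.mpr hξ
  have hη0 : 0 < ‖η‖ := norm_pos_iff.mpr hη
  rw [Hker, div_rpow hη0.le hξ0.le, rpow_sub hξ0 _ β,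
    show -2 * ((d + 1 - 2 * γ - β) / 2) = β + (2 * γ - d - 1) by ring, rpow_add hη0,
    show -2 * ((d + 1 - 2 * γ) / 2) = 2 * γ - d - 1 by ring]
  ring

lemma rieszGamma_normalization_pos (hγ : γ ∈ Ioo (1 / 2) ((d + 2) / 4 : ℝ)) :
    0 < rieszGamma d ((d + 1 - 2 * γ) / 2) ∧ 0 < rieszGamma d (2 * γ - 1) := by
  obtain ⟨hγ1, hγ2⟩ := hγ
  constructor <;> exact rieszGamma_pos (by linarith) (by linarith)

theorem ratioMoment_eq (hγ : γ ∈ Ioo (1 / 2) ((d + 2) / 4 : ℝ)) (hξ : ξ ≠ 0)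
    (hβ : β ∈ Ioo (1 - 2 * γ) (d + 2 - 4 * γ)) :
    ratioMoment d γ ξ β = ENNReal.ofReal
      (rieszGamma d ((d + 1 - 2 * γ - β) / 2) * rieszGamma d (2 * γ - 1 + β / 2) /
        (rieszGamma d ((d + 1 - 2 * γ) / 2) * rieszGamma d (2 * γ - 1))) := by
  obtain ⟨hg₁, hg₂⟩ := rieszGamma_normalization_pos hγ
  have hγ1 : 1 / 2 < γ := hγ.1
  obtain ⟨hβ1, hβ2⟩ := hβ
  have : Nontrivial (EuclideanSpace ℝ (Fin d)) := nontrivial_of_ne ξ 0 hξ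
  have hξ0 : 0 < ‖ξ‖ := norm_pos_iff.mpr hξ
  have hcdg : 0 < cdg d γ := by
    rw [cdg_eq_inv]
    positivity
  have hae : ∀ᵐ η, ENNReal.ofReal ((‖η‖ / ‖ξ‖) ^ β * Hker d γ η ξ) =
      ENNReal.ofReal (cdg d γ * ‖ξ‖ ^ (d + 2 - 4 * γ - β)) * ENNReal.ofReal
        (‖η‖ ^ (-2 * ((d + 1 - 2 * γ - β) / 2)) * ‖ξ - η‖ ^ (-2 * ((d + 1 - 2 * γ) / 2))) := by
    filter_upwards [Measure.ae_ne volume 0] with η hη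
    rw [rpow_mul_Hker hξ hη, ENNReal.ofReal_mul (by positivity)]
  have hriesz := lintegral_norm_rpow_mul_norm_sub_rpow (E := EuclideanSpace ℝ (Fin d))
    (a := (d + 1 - 2 * γ - β) / 2) (b := (d + 1 - 2 * γ) / 2) (c := 2 * γ - 1 + β / 2)
    (ξ := ξ)
  rw [finrank_euclideanSpace_fin] at hriesz
  rw [ratioMoment_eq_lintegral_mul_Hker, lintegral_congr_ae hae,
    lintegral_const_mul' _ _ ENNReal.ofReal_ne_top,
    hriesz (by linarith) (by linarith) (by linarith) (by ring) hξ,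
    ← ENNReal.ofReal_mul (by positivity), cdg_eq_inv,
    show 2 * (2 * γ - 1 + β / 2) - d = -(d + 2 - 4 * γ - β) by ring, rpow_neg hξ0.le]
  congr 1
  field_simp

lemma ratioMoment_sub (hγ : γ ∈ Ioo (1 / 2) ((d + 2) / 4 : ℝ)) (hξ : ξ ≠ 0)
    (hβ : β ∈ Ioo (1 - 2 * γ) (d + 2 - 4 * γ)) :
    ratioMoment d γ ξ (d + 3 - 6 * γ - β) = ratioMoment d γ ξ β := by
  have hβ' : d + 3 - 6 * γ - β ∈ Ioo (1 - 2 * γ) (d + 2 - 4 * γ) :=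
    ⟨by linarith [hβ.2], by linarith [hβ.1]⟩
  rw [ratioMoment_eq hγ hξ hβ, ratioMoment_eq hγ hξ hβ',
    show (d + 1 - 2 * γ - (d + 3 - 6 * γ - β)) / 2 = 2 * γ - 1 + β / 2 by ring,
    show 2 * γ - 1 + (d + 3 - 6 * γ - β) / 2 = (d + 1 - 2 * γ - β) / 2 by ring,
    mul_comm (rieszGamma d (2 * γ - 1 + β / 2))]

lemma isProbabilityMeasure_majorizingMeasure (hγ : γ ∈ Ioo (1 / 2) ((d + 2) / 4 : ℝ))
    (hξ : ξ ≠ 0) : IsProbabilityMeasure (majorizingMeasure d γ ξ) := by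
  obtain ⟨hg₁, hg₂⟩ := rieszGamma_normalization_pos hγ
  have hzero := ratioMoment_eq (β := 0) hγ hξ ⟨by linarith [hγ.1], by linarith [hγ.2]⟩
  simp only [sub_zero, zero_div, add_zero] at hzero
  rw [div_self (by positivity)] at hzero
  exact ⟨by simpa [ratioMoment] using hzero⟩

lemma ae_majorizingMeasure_norm_div_norm_pos (hξ : ξ ≠ 0) :
    ∀ᵐ η ∂majorizingMeasure d γ ξ, 0 < ‖η‖ / ‖ξ‖ := by
  have : Nontrivial (EuclideanSpace ℝ (Fin d)) := nontrivial_of_ne ξ 0 hξ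
  refine (withDensity_absolutelyContinuous _ _).ae_le ?_
  filter_upwards [Measure.ae_ne volume 0] with η hη
  exact div_pos (norm_pos_iff.mpr hη) (norm_pos_iff.mpr hξ)

lemma ae_majorizingMeasure_norm_div_norm_ne_one (hξ : ξ ≠ 0) :
    ∀ᵐ η ∂majorizingMeasure d γ ξ, ‖η‖ / ‖ξ‖ ≠ 1 := by
  have : Nontrivial (EuclideanSpace ℝ (Fin d)) := nontrivial_of_ne ξ 0 hξ
  refine (withDensity_absolutelyContinuous _ _).ae_le ?_
  filter_upwards [measure_eq_zero_iff_ae_notMem.mp (Measure.addHaar_sphere volume 0 ‖ξ‖)]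
    with η hη
  rwa [ne_eq, div_eq_one_iff_eq (norm_ne_zero_iff.mpr hξ), ← mem_sphere_zero_iff_norm]

lemma one_lt_ratioMoment_of_mem_Ioo (hγ : γ ∈ Ioo (1 / 2) ((d + 2) / 4 : ℝ)) (hξ : ξ ≠ 0)
    (hβ : β ∈ Ioo (1 - 2 * γ) (d + 2 - 4 * γ)) (hβδ : 0 < β * (β - (d + 3 - 6 * γ))) :
    1 < ratioMoment d γ ξ β := by
  have := isProbabilityMeasure_majorizingMeasure hγ hξ
  have hpos := ae_majorizingMeasure_norm_div_norm_pos (γ := γ) hξ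
  have hne := (ae_majorizingMeasure_norm_div_norm_ne_one (γ := γ) hξ).frequently
  have hsymm := ratioMoment_sub hγ hξ hβ
  rcases pos_and_pos_or_neg_and_neg_of_mul_pos hβδ with ⟨hβ0, hδ⟩ | ⟨hβ0, hδ⟩
  · rw [← neg_sub β] at hsymm
    exact one_lt_lintegral_rpow_of_eq_rpow_neg (by fun_prop) hpos hne hβ0 hδ hsymm
  · rw [← hsymm]
    refine one_lt_lintegral_rpow_of_eq_rpow_neg (by fun_prop) hpos hne (by linarith)
      (neg_pos.mpr hβ0) ?_
    rw [neg_neg]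
    exact hsymm.symm

lemma one_lt_ratioMoment_mul (hγ : γ ∈ Ioo (1 / 2) ((d + 2) / 4 : ℝ)) (hξ : ξ ≠ 0) {k : ℝ}
    (hk : 1 ≤ k) (h : 1 < ratioMoment d γ ξ β) : 1 < ratioMoment d γ ξ (β * k) := by
  have := isProbabilityMeasure_majorizingMeasure hγ hξ
  refine (one_lt_lintegral_rpow (by fun_prop) hk h).trans_eq (lintegral_congr fun η => ?_)
  rw [ENNReal.ofReal_rpow_of_nonneg (by positivity) (by linarith), ← rpow_mul (by positivity)]

theorem one_lt_ratioMoment (hγ : γ ∈ Ioo (1 / 2) ((d + 2) / 4 : ℝ)) (hξ : ξ ≠ 0)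
    (hβ : 0 < β * (β - (d + 3 - 6 * γ))) : 1 < ratioMoment d γ ξ β := by
  obtain ⟨hγ1, hγ2⟩ := hγ
  obtain ⟨β', hβ', hβ'δ, hβ'0, hββ'⟩ : ∃ β' ∈ Ioo (1 - 2 * γ) (d + 2 - 4 * γ),
      0 < β' * (β' - (d + 3 - 6 * γ)) ∧ β' ≠ 0 ∧ 1 ≤ β / β' := by
    rcases pos_and_pos_or_neg_and_neg_of_mul_pos hβ with ⟨hβ0, hδ⟩ | ⟨hβ0, hδ⟩
    · obtain ⟨β', hlo, hhi⟩ : ∃ β', max 0 (d + 3 - 6 * γ) < β' ∧ β' < min β (d + 2 - 4 * γ) :=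
        exists_between (max_lt (lt_min hβ0 (by linarith)) (lt_min (by linarith) (by linarith)))
      rw [max_lt_iff] at hlo
      rw [lt_min_iff] at hhi
      exact ⟨β', ⟨by linarith, hhi.2⟩, mul_pos hlo.1 (sub_pos.mpr hlo.2), hlo.1.ne',
        (one_le_div hlo.1).mpr hhi.1.le⟩
    · obtain ⟨β', hlo, hhi⟩ : ∃ β', max β (1 - 2 * γ) < β' ∧ β' < min 0 (d + 3 - 6 * γ) :=
        exists_between (max_lt (lt_min hβ0 (by linarith)) (lt_min (by linarith) (by linarith)))
      rw [max_lt_iff] at hlo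
      rw [lt_min_iff] at hhi
      exact ⟨β', ⟨hlo.2, by linarith⟩, mul_pos_of_neg_of_neg hhi.1 (sub_neg.mpr hhi.2), hhi.1.ne,
        (one_le_div_of_neg hhi.1).mpr hlo.1.le⟩
  rw [← mul_div_cancel₀ β hβ'0]
  exact one_lt_ratioMoment_mul ⟨hγ1, hγ2⟩ hξ hββ'
    (one_lt_ratioMoment_of_mem_Ioo ⟨hγ1, hγ2⟩ hξ hβ' hβ'δ)

end MajorizingKernel

-- The condition on `b` says that `b` is outside the closed interval between `0` and its mirror
-- image `d + 3 - 6γ` under the symmetry of the moments.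
theorem stmt6_general {d : ℕ} {γ : ℝ} (hγ : γ ∈ Ioo (1 / 2) ((d + 2) / 4 : ℝ))
    {ξ : EuclideanSpace ℝ (Fin d)} (hξ : ξ ≠ 0) {b : ℝ} (hb : 0 < b * (b - (d + 3 - 6 * γ))) :
    1 < ∫⁻ η, ENNReal.ofReal ((‖η‖ / ‖ξ‖) ^ b * Hker d γ η ξ) := by
  rw [← ratioMoment_eq_lintegral_mul_Hker]
  exact one_lt_ratioMoment hγ hξ hb

theorem stmt6 (d : ℕ) (hd : 2 ≤ d) (γ : ℝ)
    (hγ : γ ∈ Set.Ico (((d : ℝ) + 3)/6) (((d : ℝ) + 2)/4))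
    (ξ : EuclideanSpace ℝ (Fin d)) (hξ : ξ ≠ 0) (b : ℝ) (hb : 0 < b) :
    1 < ∫⁻ η, ENNReal.ofReal ((‖η‖ / ‖ξ‖) ^ b * Hker d γ η ξ) := by
  have hγ1 : 1 / 2 < γ := by linarith [hγ.1, hγ.2]
  exact stmt6_general ⟨hγ1, hγ.2⟩ hξ (mul_pos hb (by linarith [hγ.1]))
end
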